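/- arXiv:1210.3146 — 4 statements merged into one kernel-verified Lean document; each statement's English description precedes it below -/
import Mathlib

section
/- Let w be a privileged word and let u be a border of w. Then u is privileged. -/
/-- Number of occurrences of `u` as a factor of `w` (positions are 0-indexed). -/
noncomputable def occCount {A : Type*} (u w : List A) : ℕ :=
  Set.ncard {i : ℕ | i + u.length ≤ w.length ∧ (w.drop i).take u.length = u}

/-- `v` is a complete first return to `u`: `u` is a prefix and a suffix of `v`,
and `u` has exactly two occurrences in `v`. -/
def IsCompleteFirstReturn {A : Type*} (v u : List A) : Prop :=
  u <+: v ∧ u <:+ v ∧ occCount u v = 2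

/-- Privileged words: the empty word and the single letters are privileged, and a word of
length at least 2 is privileged if it is a complete first return to a shorter privileged word. -/
inductive Privileged {A : Type*} : List A → Prop where
  | nil : Privileged ([] : List A)
  | single (a : A) : Privileged [a]
  | ret (w u : List A) : 2 ≤ w.length → u.length < w.length → Privileged u →
      IsCompleteFirstReturn w u → Privileged w

/-- A complete return word: a complete first return to some word
(the empty word counted by convention; letters are complete first returns to the empty word). -/
def IsCompleteReturnWord {A : Type*} (v : List A) : Prop :=
  v = [] ∨ ∃ u : List A, IsCompleteFirstReturn v u

/-- Position `i` of `w` (1-based, `1 ≤ i ≤ |w|`) introduces the factor `u`: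
`u` occurs in `w` ending at position `i` and `u` occurs exactly once in the prefix `w[1,i]`. -/
def Introduces {A : Type*} (w : List A) (i : ℕ) (u : List A) : Prop :=
  1 ≤ i ∧ i ≤ w.length ∧ u <:+ w.take i ∧ occCount u (w.take i) = 1

/-- A finite word is rich if it has exactly `|w| + 1` distinct palindromic factors. -/
noncomputable def RichWord {A : Type*} (w : List A) : Prop :=
  Set.ncard {u : List A | u <:+: w ∧ u.reverse = u} = w.length + 1

/-- `u` is a (finite) factor of the infinite word `w`. -/
def IsFactorInf {A : Type*} (w : ℕ → A) (u : List A) : Prop :=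
  ∃ i : ℕ, u = (List.range u.length).map fun k => w (i + k)

/-- A Q-property of finite words. -/
structure IsQProperty {A : Type*} (Q : List A → Prop) : Prop where
  q_nil : Q []
  q_single : ∀ a : A, Q [a]
  ends_at_every_position : ∀ (w : List A) (i : ℕ), 1 ≤ i → i ≤ w.length →
    ∃ u : List A, u ≠ [] ∧ u <:+ w.take i ∧ Q u
  introduces_at_most_one : ∀ (w : List A) (i : ℕ) (u v : List A),
    Introduces w i u → Introduces w i v → Q u → Q v → u = v

/-- Q-complexity of an infinite word: the number of distinct factors of length `n`
having property `Q`. -/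
noncomputable def qComplexityInf {A : Type*} (w : ℕ → A) (Q : List A → Prop) (n : ℕ) : ℕ :=
  Set.ncard {u : List A | IsFactorInf w u ∧ Q u ∧ u.length = n}

/-- Privileged complexity of an infinite word. -/
noncomputable def privComplexityInf {A : Type*} (w : ℕ → A) (n : ℕ) : ℕ :=
  Set.ncard {u : List A | IsFactorInf w u ∧ Privileged u ∧ u.length = n}

/-- Palindromic complexity of an infinite word. -/
noncomputable def palComplexityInf {A : Type*} (w : ℕ → A) (n : ℕ) : ℕ :=
  Set.ncard {u : List A | IsFactorInf w u ∧ u.reverse = u ∧ u.length = n}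

/-- An infinite word is ultimately periodic if it is of the form `u v v v ⋯`
with `v` nonempty. -/
def UltimatelyPeriodic {A : Type*} (w : ℕ → A) : Prop :=
  ∃ u v : List A, v ≠ [] ∧ ∀ n : ℕ, w n =
    if n < u.length then u.getD n (w 0)
    else v.getD ((n - u.length) % v.length) (w 0)

/-- An infinite word is Sturmian if it has exactly `n + 1` distinct factors of
length `n` for every `n`. -/
def Sturmian {A : Type*} (w : ℕ → A) : Prop :=
  ∀ n : ℕ, Set.ncard {u : List A | IsFactorInf w u ∧ u.length = n} = n + 1

/-- A finite binary word is balanced: its set of factors is balanced. -/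
def BalancedWord (x : List Bool) : Prop :=
  ∀ u v : List Bool, u <:+: x → v <:+: x → u.length = v.length →
    ((u.count true : ℤ) - (v.count true : ℤ)).natAbs ≤ 1

/-- `u` is a right special factor of the infinite word `w`. -/
def RightSpecial {A : Type*} (w : ℕ → A) (u : List A) : Prop :=
  ∃ a b : A, a ≠ b ∧ IsFactorInf w (u ++ [a]) ∧ IsFactorInf w (u ++ [b])

/-- The Thue-Morse word: the `n`-th letter is the parity of the number of ones in the
binary expansion of `n` (`false` = 0, `true` = 1). -/
def thueMorse (n : ℕ) : Bool := (Nat.digits 2 n).count 1 % 2 == 1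

/-- Every border of a privileged word is privileged. -/
theorem border_of_privileged_is_privileged {A : Type*} (w u : List A)
    (hw : Privileged w) (hpre : u <+: w) (hsuf : u <:+ w) (hproper : u ≠ w) :
    Privileged u := by
  induction hw generalizing u with
  | nil => exact absurd (List.prefix_nil.mp hpre) hproper
  | single a =>
    have h1 := hpre.length_le
    have h2 : u.length ≠ [a].length := fun h => hproper (hpre.eq_of_length h)
    have h3 : u = [] := by
      apply List.eq_nil_of_length_eq_zero
      simp at h1 h2
      omega
    rw [h3]
    exact Privileged.nil
  | ret w v hlen hlt hv hret ih =>
    obtain ⟨vp, vs, hocc⟩ := hret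
    have huw : u.length < w.length :=
      lt_of_le_of_ne hpre.length_le fun h => hproper (hpre.eq_of_length h)
    rcases lt_trichotomy u.length v.length with h | h | h
    · refine ih u (List.prefix_of_prefix_length_le hpre vp h.le)
        (List.suffix_of_suffix_length_le hsuf vs h.le) ?_
      intro he
      rw [he] at h
      exact lt_irrefl _ h
    · have : u = v := (List.prefix_of_prefix_length_le hpre vp h.le).eq_of_length h
      rw [this]
      exact hv
    · exfalso
      have vu : v <:+ u := List.suffix_of_suffix_length_le vs hsuf h.le
      unfold occCount at hocc
      have key : ∀ a b : List A, w = a ++ v ++ b → a.length ∈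
          {i : ℕ | i + v.length ≤ w.length ∧ (w.drop i).take v.length = v} := by
        intro a b hw
        subst hw
        simp
      have hfin := Set.finite_of_ncard_pos (by rw [hocc]; norm_num)
      obtain ⟨b, hb⟩ := vp
      obtain ⟨c, hc⟩ := vs
      obtain ⟨d, hd⟩ := vu
      obtain ⟨e, he⟩ := hpre
      have m1 := key [] b (by simp [hb])
      have m2 := key c [] (by simp [hc])
      have m3 := key d e (by rw [hd, he])
      have l2 := congrArg List.length hc
      have l3 := congrArg List.length hd
      simp only [List.length_append] at l2 l3
      have hcard : ({0, c.length, d.length} : Set ℕ).ncard = 3 :=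
        Set.ncard_eq_three.mpr ⟨0, c.length, d.length, by omega, by omega, by omega, rfl⟩
      have hle := Set.ncard_le_ncard (s := ({0, c.length, d.length} : Set ℕ)) (by
        rintro x (rfl | rfl | rfl)
        · exact m1
        · exact m2
        · exact m3) hfin
      omega
end

section
/- Let w be an infinite binary word such that for every m with 0 ≤ m ≤ n, every factor of w of length m is balanced. Then for every m with 0 ≤ m ≤ n+1, the set of privileged factors of w of length m equals the set of palindromic factors of w of length m. In particular, every infinite balanced binary word is rich. -/
namespace BalPriv

/-- The key inequality allowing to choose a slope. -/
lemma slope_ineq (S : ℕ → ℤ) (N : ℕ)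
    (hb : ∀ i j l, i + l ≤ N → j + l ≤ N → (S (i + l) - S i) - (S (j + l) - S j) ≤ 1) :
    ∀ t k l i j, k + l = t → 0 < k → 0 < l → i + l ≤ N → j + k ≤ N →
      (k : ℤ) * (S (i + l) - S i) - l * (S (j + k) - S j) < k + l := by
  intro t
  induction t using Nat.strong_induction_on with
  | _ t ih =>
    intro k l i j ht hk hl hi hj
    rcases lt_trichotomy k l with h | h | h
    · obtain ⟨d, rfl⟩ := Nat.exists_eq_add_of_lt h
      have h1 := ih (k + (d + 1)) (by omega) k (d + 1) (i + k) j rfl hk (by omega) (by omega) hj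
      have h2 := hb i j k (by omega) hj
      have e : i + (k + d + 1) = i + k + (d + 1) := by ring
      rw [e]
      push_cast at *
      have hk' : (0 : ℤ) < k := by exact_mod_cast hk
      nlinarith
    · subst h
      have h2 := hb i j k hi hj
      have hk' : (0 : ℤ) < k := by exact_mod_cast hk
      nlinarith
    · obtain ⟨d, rfl⟩ := Nat.exists_eq_add_of_lt h
      have h1 := ih (d + 1 + l) (by omega) (d + 1) l i (j + l) rfl (by omega) hl hi (by omega)
      have h2 := hb i j l (by omega) (by omega)
      have e : j + (l + d + 1) = j + l + (d + 1) := by ring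
      rw [e]
      push_cast at *
      have hk' : (0 : ℤ) < l := by exact_mod_cast hl
      nlinarith

/-- A balanced counting function is mechanical. -/
lemma mechanical (S : ℕ → ℤ) (N : ℕ)
    (hb : ∀ i j l, i + l ≤ N → j + l ≤ N → (S (i + l) - S i) - (S (j + l) - S j) ≤ 1) :
    ∃ α x : ℝ, ∀ i ≤ N, (S i : ℝ) < x + α * i ∧ x + α * i < S i + 1 := by
  classical
  have hs := slope_ineq S N hb
  let P : Finset (ℕ × ℕ) := ((Finset.range (N + 1)) ×ˢ (Finset.range (N + 1))).filter
    (fun p => 0 < p.2 ∧ p.1 + p.2 ≤ N)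
  have hP : ∀ p : ℕ × ℕ, p ∈ P ↔ 0 < p.2 ∧ p.1 + p.2 ≤ N := by
    intro p
    simp only [P, Finset.mem_filter, Finset.mem_product, Finset.mem_range]
    constructor
    · exact fun h => h.2
    · intro h; exact ⟨⟨by omega, by omega⟩, h⟩
  obtain ⟨α, hlo, hhi⟩ := Order.exists_between_finsets
    (P.image fun p => ((S (p.1 + p.2) - S p.1 - 1 : ℤ) : ℝ) / p.2)
    (P.image fun p => ((S (p.1 + p.2) - S p.1 + 1 : ℤ) : ℝ) / p.2) (by
      intro a ha b hb'
      obtain ⟨p, hp, rfl⟩ := Finset.mem_image.1 ha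
      obtain ⟨q, hq, rfl⟩ := Finset.mem_image.1 hb'
      rw [hP] at hp hq
      have := hs _ q.2 p.2 p.1 q.1 rfl hq.1 hp.1 hp.2 hq.2
      have h1 : (0 : ℝ) < p.2 := by exact_mod_cast hp.1
      have h2 : (0 : ℝ) < q.2 := by exact_mod_cast hq.1
      rw [div_lt_div_iff₀ h1 h2]
      have h3 : (S (p.1 + p.2) - S p.1 - 1) * (q.2 : ℤ) < (S (q.1 + q.2) - S q.1 + 1) * p.2 := by
        nlinarith
      exact_mod_cast h3)
  have hα : ∀ i l, 0 < l → i + l ≤ N →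
      (S (i + l) : ℝ) - S i - 1 < α * l ∧ α * l < (S (i + l) : ℝ) - S i + 1 := by
    intro i l hl hi
    have hm : (i, l) ∈ P := (hP _).2 ⟨hl, hi⟩
    have h1 := hlo _ (Finset.mem_image_of_mem _ hm)
    have h2 := hhi _ (Finset.mem_image_of_mem _ hm)
    have h3 : (0 : ℝ) < l := by exact_mod_cast hl
    simp only at h1 h2
    rw [div_lt_iff₀ h3] at h1
    rw [lt_div_iff₀ h3] at h2
    push_cast at h1 h2
    exact ⟨h1, h2⟩
  obtain ⟨x, hxlo, hxhi⟩ := Order.exists_between_finsets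
    ((Finset.range (N + 1)).image fun i => (S i : ℝ) - α * i)
    ((Finset.range (N + 1)).image fun i => (S i : ℝ) + 1 - α * i) (by
      intro a ha b hb'
      obtain ⟨i, hi, rfl⟩ := Finset.mem_image.1 ha
      obtain ⟨j, hj, rfl⟩ := Finset.mem_image.1 hb'
      rw [Finset.mem_range] at hi hj
      rcases lt_trichotomy i j with h | h | h
      · obtain ⟨d, rfl⟩ := Nat.exists_eq_add_of_lt h
        have := (hα i (d + 1) (by omega) (by omega)).2
        rw [← add_assoc] at this
        push_cast at *
        nlinarith
      · subst h; linarith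
      · obtain ⟨d, rfl⟩ := Nat.exists_eq_add_of_lt h
        have := (hα j (d + 1) (by omega) (by omega)).1
        rw [← add_assoc] at this
        push_cast at *
        nlinarith)
  refine ⟨α, x, fun i hi => ?_⟩
  have hm : i ∈ Finset.range (N + 1) := Finset.mem_range.2 (by omega)
  have h1 := hxlo _ (Finset.mem_image_of_mem _ hm)
  have h2 := hxhi _ (Finset.mem_image_of_mem _ hm)
  constructor <;> linarith

/-- The heart: two mechanical words of the same slope that agree on a prefix of length `m` and
differ at `j`; then this prefix reoccurs in the lower one. -/
lemma reoccur (S S' : ℕ → ℤ) (N m j : ℕ) (α x x' : ℝ)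
    (h0 : S 0 = 0)
    (hS : ∀ i ≤ N, (S i : ℝ) < x + α * i ∧ x + α * i < S i + 1)
    (hS' : ∀ i ≤ N, (S' i : ℝ) < x' + α * i ∧ x' + α * i < S' i + 1)
    (hag : ∀ i ≤ m, S' i = S i) (hmj : m < j) (hjN : j + m < N) (hj : S j < S' j) :
    ∃ k, 0 < k ∧ k + m < N ∧ ∀ i ≤ m, S (k + i) = S k + S i := by
  obtain ⟨q, hq, hmin⟩ := Finset.exists_min_image (Finset.range (m + 1))
    (fun i => (S i : ℝ) + 1 - α * i) ⟨0, by simp⟩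
  rw [Finset.mem_range] at hq
  obtain ⟨k, rfl⟩ : ∃ k, j = k + q := ⟨j - q, by omega⟩
  have key : ∀ i ≤ m, S (k + i) = (S (k + q) - S q) + S i := by
    intro i hi
    have hm := hmin i (Finset.mem_range.2 (by omega))
    have a1 := hS (k + i) (by omega)
    have a2 := hS i (by omega)
    have a3 := hS (k + q) (by omega)
    have a4 := hS' (k + q) (by omega)
    have a5 := hS' q (by omega)
    rw [hag q (by omega)] at a5
    have a6 : (S (k + q) : ℝ) + 1 ≤ S' (k + q) := by exact_mod_cast hj
    push_cast at *
    have b1 : ((S (k + i) : ℤ) : ℝ) < ((S (k + q) - S q + S i + 1 : ℤ) : ℝ) := by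
      push_cast; nlinarith
    have b2 : ((S (k + q) - S q + S i : ℤ) : ℝ) < ((S (k + i) + 1 : ℤ) : ℝ) := by
      push_cast; nlinarith
    have b1' := Int.cast_lt.1 b1
    have b2' := Int.cast_lt.1 b2
    omega
  refine ⟨k, by omega, by omega, fun i hi => ?_⟩
  have := key 0 (by omega)
  rw [key i hi]
  simp only [add_zero, h0] at this
  omega

/-- Prefix counting function. -/
def cnt (w : List Bool) (i : ℕ) : ℤ := ((w.take i).count true : ℤ)

lemma cnt_zero (w : List Bool) : cnt w 0 = 0 := by simp [cnt]

lemma cnt_drop (w : List Bool) (k i : ℕ) : cnt (w.drop k) i = cnt w (k + i) - cnt w k := by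
  simp [cnt, List.take_add, List.count_append]

lemma cnt_take (w : List Bool) (k i : ℕ) (h : i ≤ k) : cnt (w.take k) i = cnt w i := by
  simp [cnt, List.take_take, min_eq_left h]

lemma eq_of_cnt : ∀ (u v : List Bool), u.length = v.length →
    (∀ i ≤ u.length, cnt u i = cnt v i) → u = v := by
  intro u
  induction u with
  | nil => intro v h _; exact (List.length_eq_zero_iff.1 h.symm).symm
  | cons a u ih =>
    intro v h hc
    cases v with
    | nil => simp at h
    | cons b v =>
      have hab : a = b := by
        have := hc 1 (by simp)
        cases a <;> cases b <;> simp [cnt] at this ⊢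
      subst hab
      congr 1
      refine ih v (by simpa using h) fun i hi => ?_
      have := hc (i + 1) (by simpa using hi)
      simp only [cnt, List.take_succ_cons, List.count_cons] at this ⊢
      push_cast at this
      linarith

lemma cnt_reverse (w : List Bool) (i : ℕ) (h : i ≤ w.length) :
    cnt w.reverse i = cnt w w.length - cnt w (w.length - i) := by
  have h1 : w.reverse.take i = (w.drop (w.length - i)).reverse := by
    rw [List.take_reverse]
  have h2 := congrArg (List.count true) (List.take_append_drop (w.length - i) w)
  rw [List.count_append] at h2
  simp only [cnt, h1, List.count_reverse, List.take_length]
  omega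

lemma bal_sub {x y : List Bool} (h : BalancedWord x) (hy : y <:+: x) :
    BalancedWord y :=
  fun u v hu hv => h u v (hu.trans hy) (hv.trans hy)

lemma bal_cnt {w : List Bool} (h : BalancedWord w) (i j l : ℕ) (hi : i + l ≤ w.length)
    (hj : j + l ≤ w.length) :
    (cnt w (i + l) - cnt w i) - (cnt w (j + l) - cnt w j) ≤ 1 := by
  have := h ((w.drop i).take l) ((w.drop j).take l)
    ((List.take_prefix _ _).isInfix.trans (List.drop_suffix _ _).isInfix)
    ((List.take_prefix _ _).isInfix.trans (List.drop_suffix _ _).isInfix)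
    (by simp; omega)
  have e1 := cnt_drop w i l
  have e2 := cnt_drop w j l
  rw [← e1, ← e2]
  simp only [cnt]
  omega

/-- Consequence for lists. -/
lemma no_diff (w w' u : List Bool) (hl : w'.length = w.length) (α x x' : ℝ)
    (hS : ∀ i ≤ w.length, (cnt w i : ℝ) < x + α * i ∧ x + α * i < cnt w i + 1)
    (hS' : ∀ i ≤ w.length, (cnt w' i : ℝ) < x' + α * i ∧ x' + α * i < cnt w' i + 1)
    (hu : u <+: w) (hu' : u <+: w')
    (hend : ∀ i ≤ u.length, cnt w' (w.length - i) = cnt w (w.length - i))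
    (hno : ∀ a b, w = a ++ u ++ b → a = [] ∨ b = [])
    (j : ℕ) (hjN : j ≤ w.length) (hj : cnt w j < cnt w' j) : False := by
  have e1 : w.take u.length = u := (List.prefix_iff_eq_take.1 hu).symm
  have e2 : w'.take u.length = u := (List.prefix_iff_eq_take.1 hu').symm
  have hag : ∀ i ≤ u.length, cnt w' i = cnt w i := by
    intro i hi
    rw [← cnt_take w _ i hi, ← cnt_take w' _ i hi, e1, e2]
  have hmj : u.length < j := by
    by_contra hc
    have := hag j (by omega)
    omega
  have hjm : j + u.length < w.length := by
    by_contra hc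
    have := hend (w.length - j) (by omega)
    rw [show w.length - (w.length - j) = j by omega] at this
    omega
  obtain ⟨k, hk, hkm, hk'⟩ := reoccur (cnt w) (cnt w') w.length u.length j α x x' (cnt_zero w)
    hS hS' hag hmj hjm hj
  have e3 : (w.drop k).take u.length = u := by
    apply eq_of_cnt
    · simp; omega
    · intro i hi
      have hi' : i ≤ u.length := by simp at hi; omega
      rw [cnt_take _ _ _ hi', cnt_drop, hk' i hi']
      conv_rhs => rw [← e1]
      rw [cnt_take _ _ _ hi']
      ring
  have e4 : w = w.take k ++ u ++ (w.drop k).drop u.length := by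
    conv_lhs => rw [← List.take_append_drop k w, ← List.take_append_drop u.length (w.drop k), e3]
    simp
  rcases hno _ _ e4 with h | h
  · have := congrArg List.length h
    simp at this; 
    rcases this with h | h
    · omega
    · subst h; simp at hkm
  · have := congrArg List.length h
    simp at this; omega

/-- Complete first returns to palindromes in balanced words are palindromes. -/
lemma key (w u : List Bool) (hw : BalancedWord w) (hp : u.reverse = u)
    (hu : u <+: w) (hs : u <:+ w) (hno : ∀ a b, w = a ++ u ++ b → a = [] ∨ b = []) :
    w.reverse = w := by
  obtain ⟨α, x, hS⟩ := mechanical (cnt w) w.length (bal_cnt hw)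
  have hS' : ∀ i ≤ w.length, (cnt w.reverse i : ℝ) <
      ((cnt w w.length : ℝ) + 1 - x - α * w.length) + α * i ∧
      ((cnt w w.length : ℝ) + 1 - x - α * w.length) + α * i < cnt w.reverse i + 1 := by
    intro i hi
    have := hS (w.length - i) (by omega)
    rw [cnt_reverse w i hi]
    rw [Nat.cast_sub hi] at this
    push_cast
    constructor <;> nlinarith
  have hur : u <+: w.reverse := by
    rw [← hp]; exact List.reverse_prefix.2 hs
  have e1 : w.take u.length = u := (List.prefix_iff_eq_take.1 hu).symm
  have e2 : w.reverse.take u.length = u := (List.prefix_iff_eq_take.1 hur).symm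
  have hul := hu.length_le
  have hend : ∀ i ≤ u.length, cnt w.reverse (w.length - i) = cnt w (w.length - i) := by
    intro i hi
    have h1 : cnt w.reverse i = cnt w i := by
      rw [← cnt_take w _ i hi, ← cnt_take w.reverse _ i hi, e1, e2]
    rw [cnt_reverse w i (by omega)] at h1
    rw [cnt_reverse w _ (by omega), show w.length - (w.length - i) = i by omega]
    omega
  apply eq_of_cnt
  · simp
  intro i hi
  rw [List.length_reverse] at hi
  rcases lt_trichotomy (cnt w i) (cnt w.reverse i) with h | h | h
  · exact (no_diff w w.reverse u (by simp) α _ _ hS hS' hu hur hend hno i hi h).elim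
  · exact h.symm
  · refine (no_diff w.reverse w u (by simp) α _ _ (by simpa using hS') (by simpa using hS) hur hu
      (by simpa using fun i hi => (hend i hi).symm) ?_ i (by simpa using hi) h).elim
    intro a b hab
    have := congrArg List.reverse hab
    rw [List.reverse_reverse] at this
    simp only [List.reverse_append, hp, ← List.append_assoc] at this
    rcases hno _ _ this with h | h
    · right; simpa using h
    · left; simpa using h

/-- A palindromic suffix occurring elsewhere can be extended. -/
lemma extend (w q : List Bool) (hw : BalancedWord w) (hp : q.reverse = q) (hs : q <:+ w) :
    ∀ n (a b : List Bool), b.length = n → w = a ++ q ++ b → b ≠ [] →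
      ∃ k, a.length ≤ k ∧ k < w.length - q.length ∧ (w.drop k).reverse = w.drop k := by
  intro n
  induction n using Nat.strong_induction_on with
  | _ n ih =>
    intro a b hn hab hb
    have hbl := List.length_pos_iff.2 hb
    have hd : w.drop a.length = q ++ b := by rw [hab]; simp
    have hlen : w.length = a.length + q.length + b.length := by rw [hab]; simp; omega
    by_cases h : ∀ a' b', q ++ b = a' ++ q ++ b' → a' = [] ∨ b' = []
    · refine ⟨a.length, le_rfl, by omega, ?_⟩
      rw [hd]
      have hsuf : q ++ b <:+ w := ⟨a, by rw [hab]; simp⟩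
      refine key _ q (bal_sub hw hsuf.isInfix) hp (List.prefix_append _ _) ?_ h
      exact List.suffix_of_suffix_length_le hs hsuf (by simp)
    · push Not at h
      obtain ⟨a', b', he, ha', hb'⟩ := h
      have hal := List.length_pos_iff.2 ha'
      have hl := congrArg List.length he
      simp at hl
      obtain ⟨k, h1, h2, h3⟩ := ih b'.length (by omega) (a ++ a') b' rfl
        (by rw [hab, List.append_assoc a q b, he]; simp) hb'
      exact ⟨k, by simp at h1; omega, h2, h3⟩

lemma cfr_iff {A : Type*} (w u : List A) (hl : u.length < w.length) :
    IsCompleteFirstReturn w u ↔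
      u <+: w ∧ u <:+ w ∧ ∀ a b, w = a ++ u ++ b → a = [] ∨ b = [] := by
  unfold IsCompleteFirstReturn occCount
  refine and_congr_right fun hp => and_congr_right fun hs => ?_
  set T := {i : ℕ | i + u.length ≤ w.length ∧ (w.drop i).take u.length = u} with hT
  have hTf : T.Finite := (Set.finite_Iic w.length).subset (by
    intro i hi; have := hi.1; simp; omega)
  have hsub : ({0, w.length - u.length} : Set ℕ) ⊆ T := by
    intro i hi
    rcases hi with rfl | hi
    · exact ⟨by omega, by simpa using (List.prefix_iff_eq_take.1 hp).symm⟩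
    · simp only [Set.mem_singleton_iff] at hi
      subst hi
      refine ⟨by omega, ?_⟩
      rw [← List.suffix_iff_eq_drop.1 hs]; simp
  have hpair : ({0, w.length - u.length} : Set ℕ).ncard = 2 := Set.ncard_pair (by omega)
  constructor
  · intro h a b hab
    have heq := Set.eq_of_subset_of_ncard_le hsub (by omega) hTf
    have hlen : w.length = a.length + u.length + b.length := by rw [hab]; simp; omega
    have hm : a.length ∈ T := ⟨by omega, by rw [hab]; simp⟩
    rw [← heq] at hm
    rcases hm with h | h
    · left; exact List.length_eq_zero_iff.1 h
    · right
      simp only [Set.mem_singleton_iff] at h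
      exact List.length_eq_zero_iff.1 (by omega)
  · intro h
    rw [← hpair]
    congr 1
    refine Set.Subset.antisymm ?_ hsub
    rintro k ⟨h1, e3⟩
    have e4 : w = w.take k ++ u ++ (w.drop k).drop u.length := by
      conv_lhs => rw [← List.take_append_drop k w, ← List.take_append_drop u.length (w.drop k), e3]
      simp
    rcases h _ _ e4 with h | h
    · have := congrArg List.length h
      simp only [List.length_take, List.length_nil] at this
      left; omega
    · have := congrArg List.length h
      simp only [List.length_drop, List.length_nil] at this
      right
      simp only [Set.mem_singleton_iff]
      omega

lemma priv_pal {w : List Bool} (h : Privileged w) : BalancedWord w → w.reverse = w := by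
  induction h with
  | nil => simp
  | single a => simp
  | ret w u h2 hlt hu hc ih =>
    intro hb
    rw [cfr_iff _ _ hlt] at hc
    obtain ⟨h3, h4, h5⟩ := hc
    exact key w u hb (ih (bal_sub hb h3.isInfix)) h3 h4 h5

lemma pal_priv : ∀ (n : ℕ) (w : List Bool), w.length = n → BalancedWord w → w.reverse = w →
    Privileged w := by
  classical
  intro n
  induction n using Nat.strong_induction_on with
  | _ n ih =>
    intro w hn hb hp
    rcases lt_or_ge w.length 2 with h | h
    · match w, h with
      | [], _ => exact .nil
      | [a], _ => exact .single a
    · have hex : ∃ k, 0 < k ∧ (w.drop k).reverse = w.drop k := ⟨w.length, by omega, by simp⟩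
      obtain ⟨hk, hk'⟩ := Nat.find_spec hex
      have hmin := fun k => @Nat.find_min _ _ hex k
      have hle : Nat.find hex ≤ w.length := Nat.find_min' hex ⟨by omega, by simp⟩
      generalize Nat.find hex = k at *
      have hs : w.drop k <:+ w := List.drop_suffix _ _
      have hlt : (w.drop k).length < w.length := by simp; omega
      refine .ret w (w.drop k) h hlt ?_ ?_
      · exact ih _ (by omega) _ rfl (bal_sub hb hs.isInfix) hk'
      · rw [cfr_iff _ _ hlt]
        refine ⟨?_, hs, ?_⟩
        · have := List.reverse_prefix.2 hs
          rwa [hk', hp] at this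
        · intro a b hab
          by_contra hcon
          push Not at hcon
          obtain ⟨k', h1, h2, h3⟩ := extend w _ hb hk' hs _ a b rfl hab hcon.2
          have := List.length_pos_iff.2 hcon.1
          simp at h2
          exact hmin k' (by omega) ⟨by omega, h3⟩

lemma priv_ends {A : Type*} {w : List A} (h : Privileged w) : w.head? = w.getLast? := by
  induction h with
  | nil => simp
  | single a => simp
  | ret w u h2 hlt hu hc ih =>
    rw [cfr_iff _ _ hlt] at hc
    obtain ⟨⟨s, rfl⟩, ⟨t, ht⟩, h5⟩ := hc
    cases u with
    | nil =>
      exfalso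
      simp only [List.nil_append] at *
      match s, h2 with
      | a :: b :: s, _ =>
        have := h5 [a] (b :: s) (by simp)
        simp at this
    | cons c u =>
      rw [← ht] 
      rw [List.getLast?_append, ← ih, ht]
      simp

lemma pal_ends {A : Type*} {w : List A} (h : w.reverse = w) : w.head? = w.getLast? := by
  conv_lhs => rw [← h]
  simp

lemma ends_cases {c d : Bool} {z x : List Bool} (h : x <:+: c :: (z ++ [d])) :
    x = c :: (z ++ [d]) ∨ (x <:+: z) ∨ (∃ y, x = c :: y ∧ y <+: z) ∨
      (∃ y, x = y ++ [d] ∧ y <:+ z) := by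
  rw [List.infix_cons_iff] at h
  rcases h with h | h
  · rw [← List.cons_append, List.prefix_concat_iff] at h
    rcases h with h | h
    · left; simpa using h
    · rw [List.prefix_cons_iff] at h
      rcases h with rfl | ⟨t, rfl, ht⟩
      · right; left; simp
      · right; right; left; exact ⟨t, rfl, ht⟩
  · rw [List.infix_concat_iff] at h
    rcases h with h | h
    · rw [List.suffix_concat_iff] at h
      rcases h with rfl | ⟨t, rfl, ht⟩
      · right; left; simp
      · right; right; right; exact ⟨t, by simp, ht⟩
    · right; left; exact h

lemma bal_ext (u : List Bool) (he : u.head? = u.getLast?) (h1 : BalancedWord u.tail)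
    (h2 : BalancedWord u.dropLast) : BalancedWord u := by
  rcases u with _ | ⟨c, u⟩
  · simpa using h1
  rcases List.eq_nil_or_concat u with rfl | ⟨z, d, rfl⟩
  · intro x y hx hy hl
    have a1 := hx.length_le
    have a2 := hy.length_le
    have a3 := List.count_le_length (a := true) (l := x)
    have a4 := List.count_le_length (a := true) (l := y)
    simp at a1 a2
    omega
  · rw [List.concat_eq_append] at he h1 h2 ⊢
    have hcd : c = d := by
      rw [← List.cons_append, List.getLast?_concat] at he
      simpa using he
    subst hcd
    have h1' : BalancedWord (z ++ [c]) := by simpa using h1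
    have h2' : BalancedWord (c :: z) := by
      rw [← List.cons_append, List.dropLast_concat] at h2; exact h2
    intro x y hx hy hl
    have za : z <:+: z ++ [c] := (List.prefix_append _ _).isInfix
    have zb : z <:+: c :: z := (List.suffix_cons _ _).isInfix
    have pr : ∀ {t : List Bool}, t <+: z → c :: t <:+: c :: z := fun ht =>
      (List.cons_prefix_cons.2 ⟨rfl, ht⟩).isInfix
    have sf : ∀ {t : List Bool}, t <:+ z → t ++ [c] <:+: z ++ [c] := by
      rintro t ⟨s, rfl⟩
      exact List.IsSuffix.isInfix ⟨s, by simp⟩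
    by_cases hfull : x.length = (c :: (z ++ [c])).length
    · rw [hx.eq_of_length hfull, hy.eq_of_length (by omega)]; simp
    rcases ends_cases hx with rfl | hx1 | ⟨x1, rfl, hx1⟩ | ⟨x1, rfl, hx1⟩
    · simp at hfull
    · rcases ends_cases hy with rfl | hy1 | ⟨y1, rfl, hy1⟩ | ⟨y1, rfl, hy1⟩
      · exact absurd hl hfull
      · exact h1' _ _ (hx1.trans za) (hy1.trans za) hl
      · exact h2' _ _ (hx1.trans zb) (pr hy1) hl
      · exact h1' _ _ (hx1.trans za) (sf hy1) hl
    · rcases ends_cases hy with rfl | hy1 | ⟨y1, rfl, hy1⟩ | ⟨y1, rfl, hy1⟩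
      · exact absurd hl hfull
      · exact h2' _ _ (pr hx1) (hy1.trans zb) hl
      · exact h2' _ _ (pr hx1) (pr hy1) hl
      · have := h1' x1 y1 (hx1.isInfix.trans za) (hy1.isInfix.trans za) (by simpa using hl)
        simp only [List.count_append, List.count_cons, List.count_nil]
        push_cast
        omega
    · rcases ends_cases hy with rfl | hy1 | ⟨y1, rfl, hy1⟩ | ⟨y1, rfl, hy1⟩
      · exact absurd hl hfull
      · exact h1' _ _ (sf hx1) (hy1.trans za) hl
      · have := h1' x1 y1 (hx1.isInfix.trans za) (hy1.isInfix.trans za) (by simpa using hl)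
        simp only [List.count_append, List.count_cons, List.count_nil]
        push_cast
        omega
      · exact h1' _ _ (sf hx1) (sf hy1) hl

lemma factor_sub {A : Type*} {w : ℕ → A} {x y : List A} (h : IsFactorInf w x)
    (hy : y <:+: x) : IsFactorInf w y := by
  obtain ⟨i, hi⟩ := h
  obtain ⟨s, t, hst⟩ := hy
  refine ⟨i + s.length, ?_⟩
  have hl : x.length = s.length + y.length + t.length := by rw [← hst]; simp; omega
  have e : y = (x.drop s.length).take y.length := by rw [← hst]; simp
  apply List.ext_getElem
  · simp
  intro k h1 h2
  have e1 : y[k] = x[s.length + k]'(by omega) := by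
    simp [← hst, List.getElem_append_right, h1]
  have e2 : x[s.length + k]'(by omega) = w (i + (s.length + k)) := by
    simp [List.getElem_of_eq hi]
  rw [e1, e2]
  simp [add_assoc]

lemma rich (w : List Bool) : BalancedWord w → RichWord w := by
  classical
  induction w using List.reverseRecOn with
  | nil =>
    intro _
    unfold RichWord
    have : {u : List Bool | u <:+: [] ∧ u.reverse = u} = {[]} := by
      ext u; simp only [Set.mem_setOf_eq, Set.mem_singleton_iff, List.infix_nil]
      constructor
      · exact fun h => h.1
      · rintro rfl; simp
    rw [this]; simp
  | append_singleton v a ih =>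
    intro hb
    have hv := ih (bal_sub hb (List.prefix_append _ _).isInfix)
    unfold RichWord at *
    have hex : ∃ k, ((v ++ [a]).drop k).reverse = (v ++ [a]).drop k :=
      ⟨(v ++ [a]).length, by simp⟩
    have hk' := Nat.find_spec hex
    have hmin := fun k => @Nat.find_min _ _ hex k
    have hle : Nat.find hex ≤ v.length := Nat.find_min' hex (by simp)
    generalize Nat.find hex = k at *
    have hs : (v ++ [a]).drop k <:+ v ++ [a] := List.drop_suffix _ _
    have hql : ((v ++ [a]).drop k).length = v.length + 1 - k := by simp
    have hnot : ¬ (v ++ [a]).drop k <:+: v := by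
      rintro ⟨s, t, hst⟩
      obtain ⟨k', h1, h2, h3⟩ := extend _ _ hb hk' hs _ s (t ++ [a]) rfl
        (by conv_lhs => rw [← hst]
            simp) (by simp)
      simp only [hql, List.length_append, List.length_singleton] at h2
      exact hmin k' (by omega) h3
    generalize hq : (v ++ [a]).drop k = q at *
    have hset : {u : List Bool | u <:+: v ++ [a] ∧ u.reverse = u} =
        insert q {u : List Bool | u <:+: v ∧ u.reverse = u} := by
      ext u
      simp only [Set.mem_setOf_eq, Set.mem_insert_iff]
      constructor
      · rintro ⟨h1, h2⟩
        rw [List.infix_concat_iff] at h1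
        rcases h1 with h1 | h1
        · have hu := List.suffix_iff_eq_drop.1 h1
          have hkk : k ≤ (v ++ [a]).length - u.length := by
            by_contra hc
            exact hmin _ (not_le.1 hc) (by rw [← hu]; exact h2)
          have hul := h1.length_le
          simp only [List.length_append, List.length_singleton] at hkk hul
          have hsq : u <:+ q := List.suffix_of_suffix_length_le h1 hs (by omega)
          rcases eq_or_ne u q with h | h
          · exact Or.inl h
          · right
            refine ⟨?_, h2⟩
            have hpq : u <+: q := by
              have := List.reverse_prefix.2 hsq
              rwa [h2, hk'] at this
            obtain ⟨t, ht⟩ := hpq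
            obtain ⟨s, hs'⟩ := hs
            rcases List.eq_nil_or_concat t with rfl | ⟨t', d, rfl⟩
            · simp at ht; exact absurd ht h
            · have e : (s ++ u ++ t') ++ [d] = v ++ [a] := by
                rw [← hs', ← ht]; simp
              have := (List.append_inj' e rfl).1
              exact ⟨s, t', this⟩
        · exact Or.inr ⟨h1, h2⟩
      · rintro (rfl | ⟨h1, h2⟩)
        · exact ⟨hs.isInfix, hk'⟩
        · exact ⟨h1.trans (List.prefix_append _ _).isInfix, h2⟩
    have hfin : {u : List Bool | u <:+: v ∧ u.reverse = u}.Finite :=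
      (List.finite_toSet v.sublists).subset (fun u hu => by
        simpa using hu.1.sublist)
    rw [hset, Set.ncard_insert_of_notMem (fun h => hnot h.1) hfin, hv]
    simp

end BalPriv

/-- If all factors of an infinite binary word `w` of length at most `n` are
balanced, then for every `m ≤ n + 1` the set of privileged factors of `w` of length `m`
equals the set of palindromic factors of `w` of length `m`.  In particular, every
infinite balanced binary word is rich. -/
theorem balanced_implies_priv_eq_pal_and_rich (w : ℕ → Bool) (n : ℕ)
    (hbal : ∀ m : ℕ, m ≤ n → ∀ x : List Bool, IsFactorInf w x → x.length = m →
      BalancedWord x) :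
    (∀ m : ℕ, m ≤ n + 1 →
      {u : List Bool | IsFactorInf w u ∧ Privileged u ∧ u.length = m} =
        {u : List Bool | IsFactorInf w u ∧ u.reverse = u ∧ u.length = m}) ∧
    (∀ v : ℕ → Bool,
      (∀ x y : List Bool, IsFactorInf v x → IsFactorInf v y → x.length = y.length →
        ((x.count true : ℤ) - (y.count true : ℤ)).natAbs ≤ 1) →
      ∀ x : List Bool, IsFactorInf v x → RichWord x) := by
  refine ⟨?_, ?_⟩
  · intro m hm
    have hB : ∀ u : List Bool, IsFactorInf w u → u.length = m → u.head? = u.getLast? →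
        BalancedWord u := by
      intro u hu hl he
      rcases Nat.lt_or_ge n m with h | h
      · refine BalPriv.bal_ext u he ?_ ?_
        · exact hbal _ (by simp; omega) _ (BalPriv.factor_sub hu (List.tail_suffix u).isInfix) rfl
        · exact hbal _ (by simp; omega) _
            (BalPriv.factor_sub hu (List.dropLast_prefix u).isInfix) rfl
      · exact hbal m h u hu hl
    ext u
    simp only [Set.mem_setOf_eq]
    constructor
    · rintro ⟨h1, h2, h3⟩
      exact ⟨h1, BalPriv.priv_pal h2 (hB u h1 h3 (BalPriv.priv_ends h2)), h3⟩
    · rintro ⟨h1, h2, h3⟩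
      exact ⟨h1, BalPriv.pal_priv _ u rfl (hB u h1 h3 (BalPriv.pal_ends h2)) h2, h3⟩
  · intro v hv x hx
    refine BalPriv.rich x ?_
    intro y z hy hz hl
    exact hv y z (BalPriv.factor_sub hx hy) (BalPriv.factor_sub hx hz) hl
end

section
/- Every Sturmian word is rich. -/
namespace SturmRich

/-- The window of `w` of length `n` starting at `i`. -/
def win (w : ℕ → Bool) (i n : ℕ) : List Bool := (List.range n).map fun k => w (i + k)

/-- The windows of length `n` at `i` and `j` agree. -/
def E (w : ℕ → Bool) (i j n : ℕ) : Prop := ∀ k, k < n → w (i + k) = w (j + k)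

/-- The window of length `n` at `j` is the reversal of the one at `i`. -/
def R (w : ℕ → Bool) (i j n : ℕ) : Prop := ∀ k l, k + l + 1 = n → w (i + k) = w (j + l)

/-- The window of length `n` at `i` is right special. -/
def RS (w : ℕ → Bool) (i n : ℕ) : Prop := ∃ j, E w i j n ∧ w (i + n) ≠ w (j + n)

variable {w : ℕ → Bool}

theorem win_length (i n : ℕ) : (win w i n).length = n := by simp [win]

theorem win_eq {i j n : ℕ} : win w i n = win w j n ↔ E w i j n := by
  simp [win, E]

theorem take_win (i n m : ℕ) (h : n ≤ m) : (win w i m).take n = win w i n := by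
  simp [win, ← List.map_take, List.take_range, h]

theorem fac_iff {u : List Bool} : IsFactorInf w u ↔ ∃ i, u = win w i u.length := Iff.rfl

theorem E.symm {i j n : ℕ} (h : E w i j n) : E w j i n := fun k hk => (h k hk).symm

theorem E.trans {i j l n : ℕ} (h : E w i j n) (h' : E w j l n) : E w i l n :=
  fun k hk => (h k hk).trans (h' k hk)

theorem E.mono {i j n m : ℕ} (h : E w i j n) (hm : m ≤ n) : E w i j m :=
  fun k hk => h k (by omega)

theorem E.sub {i j n : ℕ} (h : E w i j n) (c m : ℕ) (hm : c + m ≤ n) :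
    E w (i + c) (j + c) m := fun k hk => by
  have := h (c + k) (by omega)
  simpa [Nat.add_assoc] using this

theorem E.succ {i j n : ℕ} (h : E w i j n) (hlast : w (i + n) = w (j + n)) : E w i j (n + 1) := by
  intro k hk
  rcases Nat.lt_succ_iff_lt_or_eq.mp hk with h1 | rfl
  · exact h k h1
  · exact hlast

/-- The set of factors of length `n`. -/
theorem F_eq (n : ℕ) : {u : List Bool | IsFactorInf w u ∧ u.length = n} =
    Set.range (fun i => win w i n) := by
  ext u
  constructor
  · rintro ⟨⟨i, hi⟩, rfl⟩
    exact ⟨i, hi.symm⟩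
  · rintro ⟨i, rfl⟩
    refine ⟨⟨i, ?_⟩, win_length i n⟩
    simp [win]

theorem F_card (hw : Sturmian w) (n : ℕ) : (Set.range (fun i => win w i n)).ncard = n + 1 := by
  rw [← F_eq]; exact hw n

theorem F_fin (hw : Sturmian w) (n : ℕ) : (Set.range (fun i => win w i n)).Finite :=
  Set.finite_of_ncard_ne_zero (by rw [F_card hw]; omega)

theorem aper (hw : Sturmian w) (i P : ℕ) (hP : 0 < P) (h : ∀ k, i ≤ k → w (k + P) = w k) :
    False := by
  have key : ∀ x, ∃ y, y < i + P ∧ E w x y (i + P) := by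
    intro x
    induction x using Nat.strong_induction_on with
    | _ x ih =>
      by_cases hx : x < i + P
      · exact ⟨x, hx, fun _ _ => rfl⟩
      · obtain ⟨y, hy, hE⟩ := ih (x - P) (by omega)
        refine ⟨y, hy, E.trans ?_ hE⟩
        intro k _
        have := h (x - P + k) (by omega)
        rw [← this]; congr 1; omega
  have hsub : Set.range (fun x => win w x (i + P)) ⊆
      (fun x => win w x (i + P)) '' (Finset.range (i + P) : Set ℕ) := by
    rintro _ ⟨x, rfl⟩
    obtain ⟨y, hy, hE⟩ := key x
    exact ⟨y, by simpa using hy, (win_eq.mpr hE).symm⟩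
  have h1 := Set.ncard_le_ncard hsub ((Finset.finite_toSet _).image _)
  have h2 := Set.ncard_image_le (f := fun x => win w x (i + P)) (Finset.finite_toSet (Finset.range (i + P)))
  rw [F_card hw] at h1
  rw [Set.ncard_coe_finset, Finset.card_range] at h2
  omega

theorem per (hw : Sturmian w) (x y n : ℕ) (hxy : x < y) (hE : E w x y n)
    (h : ∀ z, x ≤ z → z < y → ∀ z', x ≤ z' → E w z z' n → w (z + n) = w (z' + n)) : False := by
  obtain ⟨P, rfl⟩ : ∃ P, y = x + P := ⟨y - x, by omega⟩
  have hP : 0 < P := by omega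
  have key : ∀ k, E w (x + k % P) (x + k) n := by
    intro k
    induction k with
    | zero => intro k _; simp
    | succ k ih =>
      have hr := Nat.mod_lt k hP
      have h1 := h _ (by omega) (by omega) _ (by omega) ih
      have h2 := (ih.succ h1).sub 1 n (by omega)
      by_cases hk : k % P + 1 < P
      · have : (k + 1) % P = k % P + 1 := by
          rw [Nat.add_mod, Nat.mod_eq_of_lt (a := k % P + 1 % P)]
          · rw [Nat.mod_eq_of_lt (a := 1)]; omega
          · rw [Nat.mod_eq_of_lt (a := 1)] <;> omega
        rw [this]; exact h2
      · have : (k + 1) % P = 0 := by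
          have h3 : k % P + 1 = P := by omega
          have := Nat.div_add_mod k P
          have h4 : k + 1 = P * (k / P + 1) := by rw [Nat.mul_add]; omega
          rw [h4]; exact Nat.mul_mod_right _ _
        rw [this]
        have h3 : x + k % P + 1 = x + P := by omega
        rw [h3] at h2
        exact hE.trans h2
  have key2 : ∀ k, w (x + k % P + n) = w (x + k + n) := fun k =>
    h _ (by omega) (by have := Nat.mod_lt k hP; omega) _ (by omega) (key k)
  refine aper hw (x + n) P hP ?_
  intro k hk
  obtain ⟨r, rfl⟩ : ∃ r, k = x + r + n := ⟨k - x - n, by omega⟩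
  rw [← key2 r]
  have := key2 (r + P)
  rw [Nat.add_mod_right] at this
  rw [this]; congr 1; omega

theorem exD (hw : Sturmian w) (N n : ℕ) :
    ∃ i j, N ≤ i ∧ N ≤ j ∧ E w i j n ∧ w (i + n) ≠ w (j + n) := by
  by_contra hcon
  push Not at hcon
  obtain ⟨x, hx, y, hy, hne, hxy⟩ := Set.exists_ne_map_eq_of_ncard_lt_of_maps_to
    (s := (Finset.Ico N (N + n + 2) : Set ℕ)) (t := Set.range (fun i => win w i n))
    (f := fun i => win w i n) (by rw [F_card hw, Set.ncard_coe_finset]; simp; omega)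
    (fun a _ => ⟨a, rfl⟩) (F_fin hw n)
  rw [Finset.mem_coe, Finset.mem_Ico] at hx hy
  rw [win_eq] at hxy
  rcases lt_or_gt_of_ne hne with h | h
  · exact per hw x y n h hxy fun z hz _ z' hz' hE => hcon z z' (by omega) (by omega) hE
  · exact per hw y x n h hxy.symm fun z hz _ z' hz' hE => hcon z z' (by omega) (by omega) hE

theorem uniq (hw : Sturmian w) {i i' n : ℕ} (h : RS w i n) (h' : RS w i' n) : E w i i' n := by
  by_contra hne
  obtain ⟨j, hj, hj2⟩ := h
  obtain ⟨j', hj', hj2'⟩ := h'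
  set S := Set.range (fun i => win w i (n + 1)) with hS
  have hE1 : ∀ {a b : ℕ}, win w a (n + 1) = win w b (n + 1) → E w a b n ∧ w (a + n) = w (b + n) :=
    fun hab => ⟨(win_eq.mp hab).mono (by omega), win_eq.mp hab n (by omega)⟩
  have hsub : Set.range (fun i => win w i n) ⊆
      (fun u => u.take n) '' (S \ {win w i (n + 1), win w i' (n + 1)}) := by
    rintro _ ⟨k, rfl⟩
    by_cases h1 : win w k (n + 1) = win w i (n + 1)
    · refine ⟨win w j (n + 1), ⟨⟨j, rfl⟩, ?_⟩, ?_⟩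
      · rintro (h2 | h2)
        · exact hj2 (hE1 h2).2.symm
        · exact hne (hj.trans (hE1 h2).1)
      · simp only [take_win _ n (n + 1) (by omega)]
        exact win_eq.mpr (hj.symm.trans (hE1 h1).1.symm)
    · by_cases h3 : win w k (n + 1) = win w i' (n + 1)
      · refine ⟨win w j' (n + 1), ⟨⟨j', rfl⟩, ?_⟩, ?_⟩
        · rintro (h2 | h2)
          · exact hne ((hj'.trans (hE1 h2).1).symm)
          · exact hj2' (hE1 h2).2.symm
        · simp only [take_win _ n (n + 1) (by omega)]
          exact win_eq.mpr (hj'.symm.trans (hE1 h3).1.symm)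
      · refine ⟨win w k (n + 1), ⟨⟨k, rfl⟩, ?_⟩, ?_⟩
        · rintro (h2 | h2)
          · exact h1 h2
          · exact h3 h2
        · simp only [take_win _ n (n + 1) (by omega)]
  have hf : S.Finite := F_fin hw (n + 1)
  have hf2 : (S \ {win w i (n + 1), win w i' (n + 1)}).Finite := hf.subset Set.sdiff_subset
  have c1 := Set.ncard_le_ncard hsub (hf2.image _)
  have c2 := Set.ncard_image_le (f := fun u : List Bool => u.take n) hf2
  have hpair : ({win w i (n + 1), win w i' (n + 1)} : Set (List Bool)) ⊆ S := by
    rintro _ (rfl | rfl)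
    · exact ⟨i, rfl⟩
    · exact ⟨i', rfl⟩
  have c3 := Set.ncard_sdiff_add_ncard_of_subset hpair hf
  rw [Set.ncard_pair (fun h => hne (hE1 h).1)] at c3
  have c4 := F_card hw n
  have c5 : S.ncard = n + 1 + 1 := F_card hw (n + 1)
  omega

theorem recur (hw : Sturmian w) (i n N : ℕ) : ∃ j, N ≤ j ∧ E w i j n := by
  set G : ℕ → Set (List Bool) := fun n => (fun i => win w i n) '' {i | N ≤ i} with hG
  have hGF : ∀ n, G n ⊆ Set.range (fun i => win w i n) := fun n => Set.image_subset_range _ _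
  have hGfin : ∀ n, (G n).Finite := fun n => (F_fin hw n).subset (hGF n)
  have low : ∀ n, n + 1 ≤ (G n).ncard := by
    intro n
    induction n with
    | zero =>
      have : (G 0).Nonempty := ⟨_, N, le_refl N, rfl⟩
      have := (Set.ncard_pos (hGfin 0)).mpr this
      omega
    | succ n ih =>
      obtain ⟨a, b, ha, hb, hE, hne⟩ := exD hw N n
      have hsub : G n ⊆ (fun u => u.take n) '' (G (n + 1) \ {win w a (n + 1)}) := by
        rintro _ ⟨k, hk, rfl⟩
        by_cases h1 : win w k (n + 1) = win w a (n + 1)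
        · refine ⟨win w b (n + 1), ⟨⟨b, hb, rfl⟩, ?_⟩, ?_⟩
          · intro h2
            exact hne (win_eq.mp h2 n (by omega)).symm
          · simp only [take_win _ n (n + 1) (by omega)]
            exact win_eq.mpr (hE.symm.trans ((win_eq.mp h1).mono (by omega)).symm)
        · refine ⟨win w k (n + 1), ⟨⟨k, hk, rfl⟩, h1⟩, ?_⟩
          simp only [take_win _ n (n + 1) (by omega)]
      have hf2 : (G (n + 1) \ {win w a (n + 1)}).Finite := (hGfin _).subset Set.sdiff_subset
      have c1 := Set.ncard_le_ncard hsub (hf2.image _)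
      have c2 := Set.ncard_image_le (f := fun u : List Bool => u.take n) hf2
      have hmem : win w a (n + 1) ∈ G (n + 1) := ⟨a, ha, rfl⟩
      have c3 := Set.ncard_sdiff_singleton_add_one hmem (hGfin _)
      omega
  have heq := Set.eq_of_subset_of_ncard_le (hGF n) (by rw [F_card hw]; exact low n) (F_fin hw n)
  have : win w i n ∈ G n := by rw [heq]; exact ⟨i, rfl⟩
  obtain ⟨j, hj, hji⟩ := this
  exact ⟨j, hj, (win_eq.mp hji).symm⟩

theorem RS.suffix {i c n : ℕ} (h : RS w i (c + n)) : RS w (i + c) n := by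
  obtain ⟨j, hj, hne⟩ := h
  exact ⟨j + c, hj.sub c n le_rfl, by simpa [Nat.add_assoc] using hne⟩

theorem bool3 {a b c : Bool} (h : a ≠ b) (h' : c ≠ a) : c = b := by
  revert a b c; decide

/-- Core of the balance argument, when `w j` followed by the palindrome is not right special. -/
theorem balCore (hw : Sturmian w) (i j n : ℕ) (hp : R w (j + 1) (j + 1) n)
    (hE : E w (i + 1) (j + 1) n) (hi : w i = w (i + n + 1)) (hj : w j = w (j + n + 1))
    (hne : w i ≠ w j) (hrs : ¬ RS w j (n + 1)) : False := by
  have hu : RS w (i + 1) n := ⟨j + 1, hE, by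
    have e1 : i + 1 + n = i + n + 1 := by omega
    have e2 : j + 1 + n = j + n + 1 := by omega
    rw [e1, e2, ← hi, ← hj]; exact hne⟩
  have hno : ∀ z, j ≤ z → z ≤ j + n + 1 → ¬ E w i z (n + 1) := by
    intro z hz1 hz2 hz
    have h0 : w i = w z := hz 0 (by omega)
    rcases Nat.eq_or_lt_of_le hz1 with rfl | hz1
    · exact hne h0
    rcases Nat.eq_or_lt_of_le hz2 with rfl | hz2
    · exact hne (h0.trans hj.symm)
    obtain ⟨c, rfl⟩ : ∃ c, z = j + 1 + c := ⟨z - j - 1, by omega⟩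
    obtain ⟨d, rfl⟩ : ∃ d, n = c + d + 1 := ⟨n - c - 1, by omega⟩
    have h1 := hz (d + 1) (by omega)
    have h2 := hE d (by omega)
    have h3 := hp c d rfl
    have e1 : j + 1 + c + (d + 1) = j + (c + d + 1) + 1 := by omega
    have e2 : i + 1 + d = i + (d + 1) := by omega
    rw [e1, ← hj] at h1
    rw [e2] at h2
    exact hne (by rw [h0, h3, ← h2, h1])
  have hdet : ∀ z, RS w z (n + 1) → E w i z (n + 1) := by
    intro z hz
    have hz0 : RS w z (1 + n) := by rwa [Nat.add_comm 1 n]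
    have h1 := uniq hw hu hz0.suffix
    have h2 : w i = w z := by
      by_contra h3
      have h4 : w z = w j := bool3 hne (Ne.symm h3)
      have h5 : E w j z (n + 1) := by
        intro k hk
        rcases k with _ | k
        · exact h4.symm
        · have a1 := h1 k (by omega)
          have a2 := hE k (by omega)
          have e1 : j + (k + 1) = j + 1 + k := by omega
          have e2 : z + (k + 1) = z + 1 + k := by omega
          rw [e1, e2, ← a1, a2]
      obtain ⟨y, hy, hy2⟩ := hz
      by_cases h6 : w (j + (n + 1)) = w (z + (n + 1))
      · exact hrs ⟨y, h5.trans hy, by rwa [h6]⟩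
      · exact hrs ⟨z, h5, h6⟩
    intro k hk
    rcases k with _ | k
    · exact h2
    · have a1 := h1 k (by omega)
      have e1 : i + (k + 1) = i + 1 + k := by omega
      have e2 : z + (k + 1) = z + 1 + k := by omega
      rw [e1, e2, a1]
  have hmem : win w i (n + 1) ∈ Set.range (fun i => win w i (n + 1)) := ⟨i, rfl⟩
  have c3 := Set.ncard_sdiff_singleton_add_one hmem (F_fin hw _)
  rw [F_card hw] at c3
  obtain ⟨x, hx, y, hy, hxne, hxy⟩ := Set.exists_ne_map_eq_of_ncard_lt_of_maps_to
    (s := (Finset.Ico j (j + n + 2) : Set ℕ))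
    (t := Set.range (fun i => win w i (n + 1)) \ {win w i (n + 1)})
    (f := fun i => win w i (n + 1)) (by rw [Set.ncard_coe_finset, Nat.card_Ico]; omega)
    (by
      intro a ha
      rw [Finset.mem_coe, Finset.mem_Ico] at ha
      exact ⟨⟨a, rfl⟩, fun h => hno a (by omega) (by omega) (win_eq.mp h).symm⟩)
    ((F_fin hw _).subset Set.sdiff_subset)
  rw [Finset.mem_coe, Finset.mem_Ico] at hx hy
  rw [win_eq] at hxy
  have fin : ∀ x y, j ≤ x → y ≤ j + n + 1 → x < y → E w x y (n + 1) → False := by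
    intro x y hx hy hlt hxy
    refine per hw x y (n + 1) hlt hxy ?_
    intro z hz1 hz2 z' _ hzz
    by_contra hc
    exact hno z (by omega) (by omega) (hdet z ⟨z', hzz, hc⟩)
  rcases lt_or_gt_of_ne hxne with h | h
  · exact fin x y (by omega) (by omega) h hxy
  · exact fin y x (by omega) (by omega) h hxy.symm

theorem bal (hw : Sturmian w) (i j n : ℕ) (hp : R w (j + 1) (j + 1) n)
    (hE : E w (i + 1) (j + 1) n) (hi : w i = w (i + n + 1)) (hj : w j = w (j + n + 1)) :
    w i = w j := by
  by_contra hne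
  by_cases h1 : RS w j (n + 1)
  · refine balCore hw j i n ?_ hE.symm hj hi (Ne.symm hne) ?_
    · intro k l hkl
      rw [hE k (by omega), hE l (by omega), hp k l hkl]
    · intro h2
      exact hne (uniq hw h2 h1 0 (by omega))
  · exact balCore hw i j n hp hE hi hj hne h1

theorem closed (hw : Sturmian w) (n : ℕ) : ∀ i, ∃ j, R w i j n := by
  induction n with
  | zero => intro i; exact ⟨i, fun k l h => by omega⟩
  | succ n ih =>
    intro i
    rcases n with _ | m
    · exact ⟨i, fun k l h => by
        have : k = 0 := by omega
        have : l = 0 := by omega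
        subst_vars; rfl⟩
    by_contra hcon
    push Not at hcon
    obtain ⟨x0, hx0⟩ := ih i
    obtain ⟨x1, hx1, hx01⟩ := recur hw x0 (m + 1) 1
    obtain ⟨x, rfl⟩ : ∃ x, x1 = x + 1 := ⟨x1 - 1, by omega⟩
    have hx : R w i (x + 1) (m + 1) := fun k l h => by
      rw [hx0 k l h]; exact hx01 l (by omega)
    obtain ⟨y, hy⟩ := ih (i + 1)
    -- letters
    have hc : w i = w (x + 1 + m) := hx 0 m (by omega)
    have hd : w (i + 1 + m) = w y := hy m 0 (by omega)
    have n1 : w x ≠ w (i + 1 + m) := by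
      intro h
      apply hcon x
      intro k l hkl
      rcases l with _ | l
      · have : k = m + 1 := by omega
        subst this
        rw [show i + (m + 1) = i + 1 + m by omega]; exact h.symm
      · rw [hx k l (by omega)]; congr 1; omega
    have n2 : w (y + 1 + m) ≠ w i := by
      intro h
      apply hcon y
      intro k l hkl
      rcases k with _ | k
      · have : l = m + 1 := by omega
        subst this
        rw [show y + (m + 1) = y + 1 + m by omega]; exact h.symm
      · rw [← hy k l (by omega)]; congr 1; omega
    have hxy : E w (x + 1) (y + 1) m := by
      intro k hk
      obtain ⟨l, rfl⟩ : ∃ l, m = k + l + 1 := ⟨m - k - 1, by omega⟩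
      have a := hx (l + 1) k (by omega)
      have b := hy l (k + 1) (by omega)
      rw [← a, show y + 1 + k = y + (k + 1) by omega, ← b]; congr 1; omega
    have rs1 : RS w (x + 1) m := ⟨y + 1, hxy, by rw [← hc]; exact n2.symm⟩
    obtain ⟨x', hx'⟩ := ih x
    obtain ⟨y', hy'⟩ := ih y
    have rs2 : RS w x' m := by
      refine ⟨y', ?_, ?_⟩
      · intro k hk
        obtain ⟨l, rfl⟩ : ∃ l, m = k + l + 1 := ⟨m - k - 1, by omega⟩
        rw [← hx' (l + 1) k (by omega), ← hy' (l + 1) k (by omega)]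
        have := hxy l (by omega)
        rw [show x + (l + 1) = x + 1 + l by omega, this]; congr 1; omega
      · rw [← hx' 0 m (by omega), ← hy' 0 m (by omega)]
        simp only [Nat.add_zero]
        rw [← hd]; exact n1
    have hE := uniq hw rs1 rs2
    have hpal : R w (x + 1) (x + 1) m := by
      intro k l hkl
      rw [hE l (by omega), ← hx' (k + 1) l (by omega)]; congr 1; omega
    by_cases hcd : w i = w (i + 1 + m)
    · apply hcon i
      have hs : ∀ k l, k + l + 1 = m → w (i + 1 + k) = w (x + 1 + l) := by
        intro k l hkl
        rw [← hx (k + 1) l (by omega)]; congr 1; omega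
      intro k l hkl
      rcases k with _ | k
      · rw [show l = m + 1 by omega, show i + (m + 1) = i + 1 + m by omega]; exact hcd
      · rcases l with _ | l
        · rw [show k + 1 = m + 1 by omega, show i + (m + 1) = i + 1 + m by omega]; exact hcd.symm
        · have a := hs k l (by omega)
          have b := hs l k (by omega)
          have c := hpal k l (by omega)
          rw [show i + (k + 1) = i + 1 + k by omega, show i + (l + 1) = i + 1 + l by omega,
            a, b, c]
    · have hxc : w x = w i := bool3 (Ne.symm hcd) n1
      have hyd : w (y + 1 + m) = w (i + 1 + m) := bool3 hcd n2
      have := bal hw y x m hpal hxy.symm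
        (by rw [← hd, ← hyd]; congr 1; omega) (by rw [hxc, hc]; congr 1; omega)
      rw [hxc, ← hd] at this
      exact hcd this.symm

theorem retCore (hw : Sturmian w) (i j m : ℕ) (hij : i < j) (hE : E w i j m)
    (hno : ∀ z, i < z → z < j → ¬ E w i z m) (hrs : RS w i m) (hne : w (i + m) ≠ w (j - 1))
    (h : ∀ x, E w i (x + 1) m → w x = w (j - 1) → w (x + m + 1) = w (j - 1) → False) : False := by
  have ha : ∀ x, E w i (x + 1) m → w x = w (j - 1) → w (x + m + 1) = w (i + m) := by
    intro x h1 h2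
    exact bool3 hne.symm (h x h1 h2)
  obtain ⟨j, rfl⟩ : ∃ j', j = j' + 1 := ⟨j - 1, by omega⟩
  rw [Nat.add_sub_cancel] at *
  refine per hw i (j + 1) (m + 1) hij (hE.succ ?_) ?_
  · rw [← ha j hE rfl]; congr 1; omega
  · intro z hz1 hz2 z' _ hzz
    by_contra hc
    have rs : RS w z (1 + m) := ⟨z', by rwa [Nat.add_comm], by rwa [Nat.add_comm 1 m]⟩
    have h1 := uniq hw hrs rs.suffix
    rcases Nat.lt_or_ge (z + 1) (j + 1) with h2 | h2
    · exact hno (z + 1) (by omega) h2 h1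
    · obtain rfl : z = j := by omega
      apply hc
      have a1 := ha z h1 rfl
      have a2 := ha z' (h1.trans (hzz.sub 1 m (by omega))) (hzz 0 (by omega)).symm
      rw [← Nat.add_assoc, ← Nat.add_assoc, a1, a2]

theorem ret (hw : Sturmian w) (d : ℕ) : ∀ i P m, P - m = d → 0 < P → R w i i m →
    E w i (i + P) m → (∀ z, 0 < z → z < P → ¬ E w i (i + z) m) → R w i i (P + m) := by
  induction d using Nat.strong_induction_on with
  | _ d ih =>
  intro i P m hd hP hp hE hno
  by_contra hcon
  have hex : ∃ k, ∃ l, k + l + 1 = P + m ∧ w (i + k) ≠ w (i + l) := by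
    unfold R at hcon; push Not at hcon; exact hcon
  classical
  obtain ⟨t, ⟨l, hl, hlne⟩, hmin⟩ : ∃ t, (∃ l, t + l + 1 = P + m ∧ w (i + t) ≠ w (i + l)) ∧
      ∀ k, k < t → ∀ l, k + l + 1 = P + m → w (i + k) = w (i + l) := by
    refine ⟨Nat.find hex, Nat.find_spec hex, ?_⟩
    intro k hk l hkl
    have := Nat.find_min hex hk
    push Not at this
    exact this l hkl
  have htl : t < l := by
    by_contra h
    rcases Nat.lt_or_ge l t with h1 | h1
    · exact hlne (hmin l h1 t (by omega)).symm
    · exact hlne (by rw [show l = t by omega])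
  have htm : m ≤ t := by
    by_contra h
    obtain ⟨r, rfl⟩ : ∃ r, m = t + r + 1 := ⟨m - t - 1, by omega⟩
    apply hlne
    rw [hp t r rfl, hE r (by omega)]; congr 1; omega
  by_cases hrs : RS w i m
  · have htm' : t = m := by
      by_contra hne
      obtain ⟨q, hq⟩ := closed hw (t + 1) (i + l)
      have rs : RS w i t := by
        refine ⟨q, ?_, ?_⟩
        · intro k hk
          rw [← hq (t - k) k (by omega), hmin k hk (l + (t - k)) (by omega)]; congr 1; omega
        · rw [← hq 0 t (by omega)]; exact hlne
      have rs' : RS w (i + (t - m)) m := RS.suffix (by rwa [Nat.sub_add_cancel htm])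
      exact hno (t - m) (by omega) (by omega) (uniq hw hrs rs')
    subst htm'
    obtain rfl : P = l + 1 := by omega
    by_cases hb : ∀ x, E w i (x + 1) t → w x = w (i + l) → w (x + t + 1) = w (i + l) → False
    · exact retCore hw i (i + (l + 1)) t (by omega) hE
        (fun z h1 h2 h3 => hno (z - i) (by omega) (by omega)
          (by rwa [show i + (z - i) = z by omega])) hrs hlne hb
    · push Not at hb
      obtain ⟨x, hx1, hx2, hx3, -⟩ := hb
      obtain ⟨q, hq⟩ := closed hw (l + 1 + t) i
      -- the window at q is the reversal
      have hiq : E w i q t := by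
        intro k hk
        rw [← hq (l + 1 + (t - 1 - k)) k (by omega), hp k (t - 1 - k) (by omega),
          hE _ (by omega)]
        congr 1; omega
      have hq1 : w (q + t) = w (i + l) := (hq l t (by omega)).symm
      have hq2 : w (q + l) = w (i + t) := (hq t l (by omega)).symm
      have hiq2 : E w i (q + (l + 1)) t := by
        intro k hk
        rw [hp k (t - 1 - k) (by omega), hq (t - 1 - k) (l + 1 + k) (by omega)]
        congr 1; omega
      refine retCore hw q (q + (l + 1)) t (by omega) (hiq.symm.trans hiq2) ?_ ?_ ?_ ?_
      · intro z h1 h2 h3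
        have h4 := hiq.trans h3
        refine hno (l + 1 - (z - q)) (by omega) (by omega) ?_
        intro k hk
        rw [hp k (t - 1 - k) (by omega), h4 _ (by omega),
          show i + (l + 1 - (z - q)) + k = i + (l + 1 - (z - q) + k) by omega,
          hq (l + 1 - (z - q) + k) (z - q + (t - 1 - k)) (by omega)]
        congr 1; omega
      · obtain ⟨y, hy, hy2⟩ := hrs
        by_cases h : w (q + t) = w (i + t)
        · exact ⟨y, hiq.symm.trans hy, by rwa [h]⟩
        · exact ⟨i, hiq.symm, h⟩
      · rw [show q + (l + 1) - 1 = q + l by omega, hq1, hq2]; exact hlne.symm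
      · intro y hy1 hy2 hy3
        rw [show q + (l + 1) - 1 = q + l by omega, hq2] at hy2 hy3
        have hiy := hiq.trans hy1
        have := bal hw x y t
          (fun k l hkl => by rw [← hiy k (by omega), ← hiy l (by omega), hp k l hkl])
          (hx1.symm.trans hiy) (hx2.trans hx3.symm) (hy2.trans hy3.symm)
        rw [hx2, hy2] at this
        exact hlne this.symm
  · have hext : ∀ y, E w i y m → w (y + m) = w (i + m) := by
      intro y hy
      by_contra h
      exact hrs ⟨y, hy, Ne.symm h⟩
    have hextl : ∀ x, E w i (x + 1) m → w x = w (i + m) := by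
      intro x hx
      obtain ⟨q, hq⟩ := closed hw (m + 1) x
      rw [← hext q ?_]
      · exact hq 0 m (by omega)
      · intro k hk
        rw [← hq (m - 1 - k + 1) k (by omega), hp k (m - 1 - k) (by omega), hx _ (by omega)]
        congr 1; omega
    obtain ⟨i1, hi1, hii⟩ := recur hw i (P + m) 1
    obtain ⟨s, rfl⟩ : ∃ s, i1 = s + 1 := ⟨i1 - 1, by omega⟩
    have hs1 : E w i (s + 1) m := hii.mono (by omega)
    have hs2 : E w i (s + P + 1) m := by
      have := hE.trans (hii.sub P m (by omega))
      rwa [show s + 1 + P = s + P + 1 by omega] at this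
    have l1 := hextl s hs1
    have l2 := hextl (s + P) hs2
    have r1 := hext _ hs1
    have r2 := hext _ hs2
    have hR := ih (P - (m + 2)) (by omega) s P (m + 2) rfl hP ?_ ?_ ?_
    · apply hcon
      intro k l hkl
      rw [hii k (by omega), hii l (by omega)]
      have := hR (k + 1) (l + 1) (by omega)
      rw [show s + 1 + k = s + (k + 1) by omega, show s + 1 + l = s + (l + 1) by omega]
      exact this
    · intro k l hkl
      rcases k with _ | k
      · rw [show s + l = s + 1 + m by omega, r1]; exact l1
      · rcases l with _ | l
        · rw [show s + (k + 1) = s + 1 + m by omega, r1]; exact l1.symm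
        · rw [show s + (k + 1) = s + 1 + k by omega, show s + (l + 1) = s + 1 + l by omega,
            ← hs1 k (by omega), ← hs1 l (by omega)]
          exact hp k l (by omega)
    · intro k hk
      rcases k with _ | k
      · exact l1.trans l2.symm
      · rcases Nat.lt_or_ge k m with h | h
        · rw [show s + (k + 1) = s + 1 + k by omega, show s + P + (k + 1) = s + P + 1 + k by omega,
            ← hs1 k h, ← hs2 k h]
        · rw [show s + (k + 1) = s + 1 + m by omega, show s + P + (k + 1) = s + P + 1 + m by omega,
            r1, r2]
    · intro z hz1 hz2 hz
      have h1 := hz.sub 1 m (by omega)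
      refine hno z hz1 hz2 (hs1.trans (h1.trans ?_))
      have := (hii.sub z m (by omega)).symm
      rwa [show s + 1 + z = s + z + 1 by omega] at this

theorem win_pal {i n : ℕ} : (win w i n).reverse = win w i n ↔ R w i i n := by
  constructor
  · intro h k l hkl
    have h1 : (win w i n).reverse[k]? = (win w i n)[k]? := by rw [h]
    rw [List.getElem?_reverse (by rw [win_length]; omega), win_length] at h1
    simp only [win, List.getElem?_map, List.getElem?_range (show n - 1 - k < n by omega),
      List.getElem?_range (show k < n by omega), Option.map_some, Option.some.injEq] at h1
    rw [← h1]; congr 1; omega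
  · intro h
    apply List.ext_getElem
    · simp
    · intro k h1 h2
      rw [win_length] at h2
      simp only [List.getElem_reverse, win_length]
      simp only [win, List.getElem_map, List.getElem_range]
      exact h _ _ (by omega)

theorem infix_win {i n : ℕ} {u : List Bool} :
    u <:+: win w i n ↔ ∃ z, z + u.length ≤ n ∧ u = win w (i + z) u.length := by
  constructor
  · rintro ⟨s, t, h⟩
    have hl := congrArg List.length h
    simp only [List.length_append, win_length] at hl
    refine ⟨s.length, by omega, ?_⟩
    apply List.ext_getElem
    · rw [win_length]
    · intro k h1 h2
      have h3 : (s ++ u ++ t)[s.length + k]? = (win w i n)[s.length + k]? := by rw [h]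
      rw [List.append_assoc, List.getElem?_append_right (by omega), Nat.add_sub_cancel_left,
        List.getElem?_append_left h1, List.getElem?_eq_getElem h1] at h3
      simp only [win, List.getElem?_map, List.getElem?_range (show s.length + k < n by omega),
        Option.map_some, Option.some.injEq] at h3
      simp only [win, List.getElem_map, List.getElem_range]
      rw [h3]; congr 1; omega
  · rintro ⟨z, hz, hu⟩
    have : u = ((win w i n).drop z).take u.length := by
      refine hu.trans ?_
      apply List.ext_getElem
      · simp [win]; omega
      · intro k h1 h2
        simp [win, Nat.add_assoc]
    rw [this]
    exact (List.take_prefix _ _).isInfix.trans (List.drop_suffix _ _).isInfix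

theorem rich_win (hw : Sturmian w) (i L : ℕ) :
    {u : List Bool | u <:+: win w i L ∧ u.reverse = u}.Finite ∧
    {u : List Bool | u <:+: win w i L ∧ u.reverse = u}.ncard = L + 1 := by
  induction L with
  | zero =>
    have : {u : List Bool | u <:+: win w i 0 ∧ u.reverse = u} = {[]} := by
      ext u
      simp only [win, List.range_zero, List.map_nil, Set.mem_ofPred_eq, Set.mem_singleton_iff,
        List.infix_nil]
      constructor
      · exact fun h => h.1
      · rintro rfl; simp
    rw [this]; simp
  | succ L ih =>
    classical
    have hex : ∃ s, ∃ m, s + m = L + 1 ∧ R w (i + s) (i + s) m :=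
      ⟨L + 1, 0, rfl, fun k l h => by omega⟩
    obtain ⟨s, ⟨m, hsm, hR⟩, hmin⟩ : ∃ s, (∃ m, s + m = L + 1 ∧ R w (i + s) (i + s) m) ∧
        ∀ s', s' < s → ∀ m, s' + m = L + 1 → ¬ R w (i + s') (i + s') m := by
      refine ⟨Nat.find hex, Nat.find_spec hex, ?_⟩
      intro k hk m hkm h
      exact Nat.find_min hex hk ⟨m, hkm, h⟩
    have hs : s ≤ L := by
      by_contra h
      refine hmin L (by omega) 1 rfl ?_
      intro k l hkl
      rw [show k = l by omega]
    have hnot : win w (i + s) m ∉ {u : List Bool | u <:+: win w i L ∧ u.reverse = u} := by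
      rintro ⟨h, -⟩
      rw [infix_win, win_length] at h
      have hex2 : ∃ P, 0 < P ∧ P ≤ s ∧ E w (i + s) (i + (s - P)) m := by
        obtain ⟨z, hz, hE⟩ := h
        refine ⟨s - z, by omega, by omega, ?_⟩
        rw [show s - (s - z) = z by omega]; exact win_eq.mp hE
      obtain ⟨P, ⟨hP, hPs, hE⟩, hPmin⟩ : ∃ P, (0 < P ∧ P ≤ s ∧ E w (i + s) (i + (s - P)) m) ∧
          ∀ Q, Q < P → ¬ (0 < Q ∧ Q ≤ s ∧ E w (i + s) (i + (s - Q)) m) :=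
        ⟨Nat.find hex2, Nat.find_spec hex2, fun k hk => Nat.find_min hex2 hk⟩
      refine hmin (s - P) (by omega) (P + m) (by omega) ?_
      refine ret hw _ (i + (s - P)) P m rfl hP ?_ ?_ ?_
      · intro k l hkl
        rw [← hE k (by omega), ← hE l (by omega), hR k l hkl]
      · rw [show i + (s - P) + P = i + s by omega]; exact hE.symm
      · intro z h1 h2 h3
        refine hPmin (P - z) (by omega) ⟨by omega, by omega, ?_⟩
        have := hE.trans h3
        rwa [show i + (s - P) + z = i + (s - (P - z)) by omega] at this
    have hset : {u : List Bool | u <:+: win w i (L + 1) ∧ u.reverse = u} =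
        insert (win w (i + s) m) {u : List Bool | u <:+: win w i L ∧ u.reverse = u} := by
      ext u
      simp only [Set.mem_ofPred_eq, Set.mem_insert_iff, infix_win]
      constructor
      · rintro ⟨⟨z, hz, hu⟩, hpal⟩
        by_cases h1 : z + u.length ≤ L
        · exact Or.inr ⟨⟨z, h1, hu⟩, hpal⟩
        have hzl : z + u.length = L + 1 := by omega
        have hRz : R w (i + z) (i + z) u.length := by
          rw [← win_pal, ← hu]; exact hpal
        have hsz : s ≤ z := by
          by_contra h
          exact hmin z (by omega) _ hzl hRz
        rcases Nat.eq_or_lt_of_le hsz with rfl | hlt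
        · left
          rw [show m = u.length by omega]; exact hu
        · right
          refine ⟨⟨s, by omega, ?_⟩, hpal⟩
          refine hu.trans (win_eq.mpr ?_)
          intro k hk
          rw [hRz k (u.length - 1 - k) (by omega), hR k (m - 1 - k) (by omega)]
          congr 1; omega
      · rintro (rfl | ⟨⟨z, hz, hu⟩, hpal⟩)
        · exact ⟨⟨s, by rw [win_length]; omega, by rw [win_length]⟩, win_pal.mpr hR⟩
        · exact ⟨⟨z, by omega, hu⟩, hpal⟩
    rw [hset]
    exact ⟨ih.1.insert _, by rw [Set.ncard_insert_of_notMem hnot ih.1, ih.2]⟩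

end SturmRich

/-- Every Sturmian word is rich, i.e. every factor of a Sturmian word has
the maximum number of distinct palindromic factors. -/
theorem sturmian_is_rich (w : ℕ → Bool) (hw : Sturmian w) :
    ∀ x : List Bool, IsFactorInf w x → RichWord x := by
  intro x hx
  obtain ⟨i, hi⟩ := hx
  have h := (SturmRich.rich_win hw i x.length).2
  have hx : SturmRich.win w i x.length = x := hi.symm
  rw [hx] at h
  exact h
end

section
/- An infinite word w is Sturmian if and only if its privileged complexity satisfies A_n(w) = 1 for all even n ≥ 0 and A_n(w) = 2 for all odd n ≥ 1. -/
namespace SturmPriv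

def fac {A : Type*} (w : ℕ → A) (i n : ℕ) : List A := (List.range n).map fun k => w (i + k)

def EqW {A : Type*} (w : ℕ → A) (i j n : ℕ) : Prop := ∀ k < n, w (i + k) = w (j + k)

def PalW {A : Type*} (w : ℕ → A) (i n : ℕ) : Prop := ∀ k < n, w (i + k) = w (i + (n - 1 - k))

def RSp {A : Type*} (w : ℕ → A) (i n : ℕ) : Prop := ∃ j, EqW w i j n ∧ w (i + n) ≠ w (j + n)

def Aper {A : Type*} (w : ℕ → A) : Prop := ∀ N p, 0 < p → ∃ x ≥ N, w (x + p) ≠ w x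

section gen
variable {A : Type*} (w : ℕ → A)

@[simp] lemma length_fac (i n : ℕ) : (fac w i n).length = n := by simp [fac]

lemma getElem_fac (i n k : ℕ) (h : k < (fac w i n).length) : (fac w i n)[k] = w (i + k) := by
  simp [fac]

lemma fac_eq_iff (i j n : ℕ) : fac w i n = fac w j n ↔ EqW w i j n := by
  constructor
  · intro h k hk
    have h1 := getElem_fac w i n k (by simpa using hk)
    have h2 := getElem_fac w j n k (by simpa using hk)
    rw [← h1, ← h2]
    congr 1
  · intro h
    apply List.ext_getElem
    · simp
    · intro k h1 h2
      rw [getElem_fac, getElem_fac]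
      exact h k (by simpa using h1)

lemma factor_iff (u : List A) (n : ℕ) :
    (IsFactorInf w u ∧ u.length = n) ↔ ∃ i, u = fac w i n := by
  constructor
  · rintro ⟨⟨i, hi⟩, rfl⟩
    exact ⟨i, hi⟩
  · rintro ⟨i, rfl⟩
    refine ⟨⟨i, ?_⟩, by simp⟩
    rw [length_fac]; rfl

lemma fac_factor (i n : ℕ) : IsFactorInf w (fac w i n) :=
  ((factor_iff w _ n).2 ⟨i, rfl⟩).1

lemma fac_add (i a b : ℕ) : fac w i (a + b) = fac w i a ++ fac w (i + a) b := by
  apply List.ext_getElem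
  · simp
  · intro k h1 h2
    rw [getElem_fac, List.getElem_append]
    split
    · rw [getElem_fac]
    · rename_i h
      rw [getElem_fac]
      simp at h h1
      congr 1
      rw [length_fac]
      omega

lemma fac_succ (i n : ℕ) : fac w i (n + 1) = fac w i n ++ [w (i + n)] := by
  rw [fac_add]; simp [fac]

lemma fac_drop_take (i n d q : ℕ) (h : d + q ≤ n) : ((fac w i n).drop d).take q = fac w (i + d) q := by
  have : n = d + (q + (n - d - q)) := by omega
  rw [this, fac_add, fac_add, List.drop_left' (by simp), List.take_left' (by simp)]

lemma fac_reverse_eq (i n : ℕ) : (fac w i n).reverse = fac w i n ↔ PalW w i n := by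
  constructor
  · intro h k hk
    have h1 := getElem_fac w i n k (by simpa using hk)
    have h2 := getElem_fac w i n (n - 1 - k) (by simp; omega)
    rw [← h1, ← h2]
    have : (fac w i n)[k]'(by simpa using hk) = (fac w i n).reverse[k]'(by simpa using hk) := by
      congr 1; exact h.symm
    rw [this, List.getElem_reverse]
    simp
  · intro h
    apply List.ext_getElem
    · simp
    · intro k h1 h2
      rw [List.getElem_reverse, getElem_fac, getElem_fac]
      simp at h2
      rw [length_fac]
      exact (h k h2).symm

lemma EqW.symm {w : ℕ → A} {i j n : ℕ} (h : EqW w i j n) : EqW w j i n := fun k hk => (h k hk).symm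

lemma EqW.trans {w : ℕ → A} {i j l n : ℕ} (h : EqW w i j n) (h' : EqW w j l n) : EqW w i l n :=
  fun k hk => (h k hk).trans (h' k hk)

lemma EqW.mono {w : ℕ → A} {i j n m : ℕ} (h : EqW w i j n) (hm : m ≤ n) : EqW w i j m :=
  fun k hk => h k (by omega)

lemma EqW.suffix {w : ℕ → A} {i j n : ℕ} (h : EqW w i j n) (d : ℕ) :
    EqW w (i + d) (j + d) (n - d) := fun k hk => by
  have := h (d + k) (by omega)
  rwa [← add_assoc, ← add_assoc] at this

lemma EqW.succ {w : ℕ → A} {i j n : ℕ} (h : EqW w i j n) (h' : w (i + n) = w (j + n)) :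
    EqW w i j (n + 1) := fun k hk => by
  rcases Nat.lt_succ_iff_lt_or_eq.1 hk with h1 | rfl
  · exact h k h1
  · exact h'

lemma RSp.suffix {w : ℕ → A} {i n : ℕ} (h : RSp w i n) (d : ℕ) (hd : d ≤ n) :
    RSp w (i + d) (n - d) := by
  obtain ⟨j, h1, h2⟩ := h
  refine ⟨j + d, h1.suffix d, ?_⟩
  rwa [show i + d + (n - d) = i + n by omega, show j + d + (n - d) = j + n by omega]

lemma RSp.congr {w : ℕ → A} {i i' n : ℕ} (h : RSp w i n) (h' : EqW w i' i n)  :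
    RSp w i' n := by
  obtain ⟨j, h1, h2⟩ := h
  by_cases hh : w (i' + n) = w (i + n)
  · exact ⟨j, h'.trans h1, by rwa [hh]⟩
  · exact ⟨i, h', hh⟩

/-- index form of complete first return -/
lemma cfr_iff (i n q : ℕ) (hq : q < n) :
    (IsCompleteFirstReturn (fac w i n) (fac w i q)) ↔
      (EqW w i (i + (n - q)) q ∧ ∀ d, 0 < d → d < n - q → ¬ EqW w i (i + d) q) := by
  have hpre : fac w i q <+: fac w i n := by
    have : n = q + (n - q) := by omega
    rw [this, fac_add]
    exact List.prefix_append _ _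
  have hset : {d : ℕ | d + (fac w i q).length ≤ (fac w i n).length ∧
      ((fac w i n).drop d).take (fac w i q).length = fac w i q} =
      {d | d + q ≤ n ∧ EqW w i (i + d) q} := by
    ext d
    simp only [length_fac, Set.mem_ofPred_eq]
    refine and_congr_right fun h => ?_
    rw [fac_drop_take _ _ _ _ _ h, fac_eq_iff]
    exact ⟨EqW.symm, EqW.symm⟩
  have hsuf : fac w i q <:+ fac w i n ↔ EqW w i (i + (n - q)) q := by
    have hn : n = (n - q) + q := by omega
    rw [← fac_eq_iff]
    constructor
    · intro h
      rw [List.suffix_iff_eq_drop] at h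
      rw [h]
      conv_lhs => rw [hn, fac_add]
      rw [List.drop_left' (by simp)]
    · intro h
      conv_rhs => rw [hn, fac_add]
      rw [h]
      exact List.suffix_append _ _
  unfold IsCompleteFirstReturn occCount
  rw [hset, hsuf]
  constructor
  · rintro ⟨_, h1, h2⟩
    refine ⟨h1, fun d hd hd' he => ?_⟩
    obtain ⟨x, y, hxy, hs⟩ := Set.ncard_eq_two.1 h2
    have a0 : (0:ℕ) ∈ ({x, y} : Set ℕ) := by
      rw [← hs]; exact ⟨by omega, fun k _ => rfl⟩
    have a1 : (n - q) ∈ ({x, y} : Set ℕ) := by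
      rw [← hs]; exact ⟨by omega, h1⟩
    have a2 : d ∈ ({x, y} : Set ℕ) := by
      rw [← hs]; exact ⟨by omega, he⟩
    simp only [Set.mem_insert_iff, Set.mem_singleton_iff] at a0 a1 a2
    omega
  · rintro ⟨h1, h2⟩
    refine ⟨hpre, h1, ?_⟩
    rw [Set.ncard_eq_two]
    refine ⟨0, n - q, by omega, ?_⟩
    ext d
    simp only [Set.mem_ofPred_eq, Set.mem_insert_iff, Set.mem_singleton_iff]
    constructor
    · rintro ⟨h3, h4⟩
      by_contra hc
      push Not at hc
      exact h2 d (by omega) (by omega) h4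
    · rintro (rfl | rfl)
      · exact ⟨by omega, fun k _ => rfl⟩
      · exact ⟨by omega, h1⟩

lemma priv_cases (i n : ℕ) (hn : 2 ≤ n) (h : Privileged (fac w i n)) :
    ∃ q < n, Privileged (fac w i q) ∧ EqW w i (i + (n - q)) q ∧
      ∀ d, 0 < d → d < n - q → ¬ EqW w i (i + d) q := by
  generalize hv : fac w i n = v at h
  cases h with
  | nil => have := congrArg List.length hv; simp at this; omega
  | single a => have := congrArg List.length hv; simp at this; omega
  | ret _ u h2 hl hp hr =>
    subst hv
    have hu : u = fac w i u.length := by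
      have h1 := hr.1
      rw [List.prefix_iff_eq_take] at h1
      have h3 := fac_drop_take w i n 0 u.length (by simp at hl; omega)
      simp only [List.drop_zero, add_zero] at h3
      rw [h3] at h1
      exact h1
    simp only [length_fac] at hl
    refine ⟨u.length, hl, hu ▸ hp, ?_⟩
    rw [hu] at hr
    exact (cfr_iff w i n u.length hl).1 (by simpa using hr)

lemma priv_mk (i n q : ℕ) (hn : 2 ≤ n) (hq : q < n) (hp : Privileged (fac w i q))
    (h1 : EqW w i (i + (n - q)) q) (h2 : ∀ d, 0 < d → d < n - q → ¬ EqW w i (i + d) q) :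
    Privileged (fac w i n) :=
  Privileged.ret _ (fac w i q) (by simpa using hn) (by simpa using hq) hp
    ((cfr_iff w i n q hq).2 ⟨h1, h2⟩)

lemma priv_le_one (i n : ℕ) (hn : n ≤ 1) : Privileged (fac w i n) := by
  interval_cases n
  · exact Privileged.nil
  · exact Privileged.single _

lemma priv_suffix (n : ℕ) : ∀ i, Privileged (fac w i n) → ∀ d ≤ n,
    Privileged (fac w (i + d) (n - d)) → EqW w i (i + d) (n - d) := by
  induction n using Nat.strong_induction_on with
  | _ n ih =>
    intro i hp d hd hs
    rcases Nat.lt_or_ge n 2 with hn | hn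
    · intro k hk
      have : d = 0 := by omega
      subst this; rfl
    rcases Nat.eq_zero_or_pos d with rfl | hd0
    · intro k hk; rfl
    obtain ⟨q, hq, hpq, h1, h2⟩ := priv_cases w i n hn hp
    have hpq' : Privileged (fac w (i + (n - q)) q) := by
      rwa [(fac_eq_iff w _ _ _).2 h1.symm]
    rcases Nat.lt_or_ge d (n - q) with hlt | hge
    · exfalso
      have := ih (n - d) (by omega) (i + d) hs (n - q - d) (by omega) (by
        rw [show i + d + (n - q - d) = i + (n - q) by omega, show n - d - (n - q - d) = q by omega]
        exact hpq')
      rw [show i + d + (n - q - d) = i + (n - q) by omega,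
        show n - d - (n - q - d) = q by omega] at this
      exact h2 d hd0 hlt (h1.trans this.symm)
    · have := ih q hq (i + (n - q)) hpq' (d - (n - q)) (by omega) (by
        rw [show i + (n - q) + (d - (n - q)) = i + d by omega,
          show q - (d - (n - q)) = n - d by omega]
        exact hs)
      rw [show i + (n - q) + (d - (n - q)) = i + d by omega,
          show q - (d - (n - q)) = n - d by omega] at this
      exact (h1.mono (by omega)).trans this

end gen

def Xn (X : List Bool → Prop) (n : ℕ) : Set (List Bool) := {u | X u ∧ u.length = n}

def Ex (X : List Bool → Prop) (n : ℕ) (c : Bool) : Set (List Bool) :=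
  {u | X (u ++ [c]) ∧ u.length = n}

lemma finite_len (n : ℕ) : Set.Finite {u : List Bool | u.length = n} := List.finite_length_eq Bool n

lemma Xn_finite (X : List Bool → Prop) (n : ℕ) : (Xn X n).Finite :=
  (finite_len n).subset fun _ h => h.2

lemma Ex_finite (X : List Bool → Prop) (n : ℕ) (c : Bool) : (Ex X n c).Finite :=
  (finite_len n).subset fun _ h => h.2

lemma card_succ (X : List Bool → Prop) (n : ℕ) :
    (Xn X (n + 1)).ncard = (Ex X n false ∪ Ex X n true).ncard +
      (Ex X n false ∩ Ex X n true).ncard := by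
  rw [Set.ncard_union_add_ncard_inter _ _ (Ex_finite _ _ _) (Ex_finite _ _ _)]
  have inj : ∀ c : Bool, Function.Injective (fun u : List Bool => u ++ [c]) := fun c u v h => by
    simpa using h
  rw [← Set.ncard_image_of_injective (Ex X n false) (inj false),
    ← Set.ncard_image_of_injective (Ex X n true) (inj true),
    ← Set.ncard_union_eq _ ((Ex_finite _ _ _).image _) ((Ex_finite _ _ _).image _)]
  · congr 1
    ext u
    constructor
    · rintro ⟨h1, h2⟩
      have hne : u ≠ [] := by rintro rfl; simp at h2
      have hu := List.dropLast_append_getLast hne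
      rcases hc : u.getLast hne with _ | _
      · rw [hc] at hu
        left
        exact ⟨u.dropLast, ⟨by rwa [hu], by simp [h2]⟩, hu⟩
      · rw [hc] at hu
        right
        exact ⟨u.dropLast, ⟨by rwa [hu], by simp [h2]⟩, hu⟩
    · rintro (⟨v, ⟨h1, h2⟩, rfl⟩ | ⟨v, ⟨h1, h2⟩, rfl⟩)
      · exact ⟨h1, by simp [h2]⟩
      · exact ⟨h1, by simp [h2]⟩
  · rw [Set.disjoint_left]
    rintro u ⟨v, _, rfl⟩ ⟨v', _, h⟩
    simp at h

lemma common_suffix (u v : List Bool) (hl : u.length = v.length) (hne : u ≠ v) :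
    ∃ s p q a, u = p ++ a :: s ∧ v = q ++ (!a) :: s := by
  induction u generalizing v with
  | nil => cases v with
    | nil => exact absurd rfl hne
    | cons _ _ => simp at hl
  | cons x l ih => cases v with
    | nil => simp at hl
    | cons y l' =>
      by_cases h : l = l'
      · subst h
        refine ⟨l, [], [], x, rfl, ?_⟩
        have : y = !x := by
          have : x ≠ y := fun h => hne (by rw [h])
          revert this; cases x <;> cases y <;> simp
        simp [this]
      · obtain ⟨s, p, q, a, h1, h2⟩ := ih l' (by simpa using hl) h
        exact ⟨s, x :: p, y :: q, a, by simp [h1], by simp [h2]⟩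

lemma Xn_unique_rs (X : List Bool → Prop) (m : ℕ)
    (hfac : ∀ u v : List Bool, X v → u <:+: v → X u)
    (hbal : ∀ u v : List Bool, X u → X v → u.length = v.length → u.length ≤ m →
      u.count true ≤ v.count true + 1) (n : ℕ) (hn : n + 1 ≤ m) (u v : List Bool)
    (hu : u ∈ Ex X n false ∩ Ex X n true) (hv : v ∈ Ex X n false ∩ Ex X n true) : u = v := by
  by_contra hne
  obtain ⟨s, p, q, a, h1, h2⟩ := common_suffix u v (by rw [hu.1.2, hv.1.2]) hne
  have hX1 : X (a :: (s ++ [a])) := by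
    have : X (u ++ [a]) := by cases a; exacts [hu.1.1, hu.2.1]
    exact hfac _ _ this ⟨p, [], by simp [h1]⟩
  have hX2 : X ((!a) :: (s ++ [!a])) := by
    have : X (v ++ [!a]) := by cases a; exacts [hv.2.1, hv.1.1]
    exact hfac _ _ this ⟨q, [], by simp [h2]⟩
  have hl : s.length + 2 ≤ m := by
    have := hu.1.2
    rw [h1] at this
    simp at this
    omega
  cases a
  · have := hbal _ _ hX2 hX1 (by simp) (by simp; omega)
    simp at this
  · have := hbal _ _ hX1 hX2 (by simp) (by simp; omega)
    simp at this

lemma Xn_card_le (X : List Bool → Prop) (m : ℕ)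
    (hfac : ∀ u v : List Bool, X v → u <:+: v → X u)
    (hbal : ∀ u v : List Bool, X u → X v → u.length = v.length → u.length ≤ m →
      u.count true ≤ v.count true + 1) (n : ℕ) (hn : n ≤ m) : (Xn X n).ncard ≤ n + 1 := by
  induction n with
  | zero =>
    calc (Xn X 0).ncard ≤ ({[]} : Set (List Bool)).ncard :=
          Set.ncard_le_ncard (fun u hu => List.length_eq_zero_iff.1 hu.2) (Set.finite_singleton _)
      _ = 0 + 1 := by simp
  | succ n ih =>
    rw [card_succ]
    have h1 : (Ex X n false ∪ Ex X n true).ncard ≤ (Xn X n).ncard := by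
      apply Set.ncard_le_ncard _ (Xn_finite _ _)
      rintro u (hu | hu)
      · exact ⟨hfac _ _ hu.1 ⟨[], [false], by simp⟩, hu.2⟩
      · exact ⟨hfac _ _ hu.1 ⟨[], [true], by simp⟩, hu.2⟩
    have h2 : (Ex X n false ∩ Ex X n true).ncard ≤ 1 := by
      rw [Set.ncard_le_one_iff ((Ex_finite _ _ _).inter_of_left _)]
      intro u v hu hv
      exact Xn_unique_rs X m hfac hbal n hn u v hu hv
    have := ih (by omega)
    omega

/-! ### Infinite binary words -/

section bin
variable (w : ℕ → Bool)

def cnt (i n : ℕ) : ℕ := (fac w i n).count true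

def Bal (m : ℕ) : Prop := ∀ n ≤ m, ∀ i j, cnt w i n ≤ cnt w j n + 1

lemma cnt_add (i a b : ℕ) : cnt w i (a + b) = cnt w i a + cnt w (i + a) b := by
  unfold cnt; rw [fac_add, List.count_append]

lemma cnt_one (i : ℕ) : cnt w i 1 = (w i).toNat := by
  unfold cnt fac
  cases h : w i <;> simp [h]

lemma cnt_succ (i n : ℕ) : cnt w i (n + 1) = cnt w i n + (w (i + n)).toNat := by
  rw [cnt_add, cnt_one]

lemma cnt_succ' (i n : ℕ) : cnt w i (n + 1) = (w i).toNat + cnt w (i + 1) n := by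
  rw [add_comm, cnt_add, cnt_one]

lemma cnt_congr {w : ℕ → Bool} {i j n : ℕ} (h : EqW w i j n) : cnt w i n = cnt w j n := by
  unfold cnt; rw [(fac_eq_iff w _ _ _).2 h]

lemma no_unb {m : ℕ} (hb : Bal w m) (l x y : ℕ) (hl : l + 2 ≤ m) (a : Bool)
    (h : EqW w (x + 1) (y + 1) l) (h1 : w x = a) (h2 : w (x + (l + 1)) = a)
    (h3 : w y = !a) (h4 : w (y + (l + 1)) = !a) : False := by
  have e1 : cnt w x (l + 2) = (w x).toNat + cnt w (x + 1) l + (w (x + (l + 1))).toNat := by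
    rw [cnt_succ, cnt_succ']
  have e2 : cnt w y (l + 2) = (w y).toNat + cnt w (y + 1) l + (w (y + (l + 1))).toNat := by
    rw [cnt_succ, cnt_succ']
  have e3 := cnt_congr h
  have b1 := hb (l + 2) hl x y
  have b2 := hb (l + 2) hl y x
  rw [h1, h2] at e1
  rw [h3, h4] at e2
  cases a <;> simp at e1 e2 <;> omega

lemma Fn_iff (u : List Bool) (n : ℕ) : u ∈ Xn (IsFactorInf w) n ↔ ∃ i, u = fac w i n :=
  factor_iff w u n

lemma Ex_union (n : ℕ) : Ex (IsFactorInf w) n false ∪ Ex (IsFactorInf w) n true =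
    Xn (IsFactorInf w) n := by
  ext u
  rw [Fn_iff]
  constructor
  · have : ∀ c, u ∈ Ex (IsFactorInf w) n c → ∃ i, u = fac w i n := by
      rintro c ⟨h1, h2⟩
      obtain ⟨i, hi⟩ := (factor_iff w (u ++ [c]) (n + 1)).1 ⟨h1, by simp [h2]⟩
      rw [fac_succ] at hi
      exact ⟨i, (List.append_inj' hi rfl).1⟩
    rintro (h | h)
    exacts [this _ h, this _ h]
  · rintro ⟨i, rfl⟩
    have := fac_factor w i (n + 1)
    rw [fac_succ] at this
    cases hc : w (i + n)
    · left; rw [hc] at this; exact ⟨this, by simp⟩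
    · right; rw [hc] at this; exact ⟨this, by simp⟩

lemma Ex_inter (n i : ℕ) : fac w i n ∈ Ex (IsFactorInf w) n false ∩ Ex (IsFactorInf w) n true ↔
    RSp w i n := by
  have key : ∀ c, fac w i n ∈ Ex (IsFactorInf w) n c ↔ ∃ j, EqW w i j n ∧ w (j + n) = c := by
    intro c
    constructor
    · rintro ⟨h1, h2⟩
      obtain ⟨j, hj⟩ := (factor_iff w (fac w i n ++ [c]) (n + 1)).1 ⟨h1, by simp⟩
      rw [fac_succ] at hj
      have := List.append_inj' hj rfl
      exact ⟨j, (fac_eq_iff _ _ _ _).1 this.1, by simpa using this.2.symm⟩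
    · rintro ⟨j, h1, h2⟩
      refine ⟨?_, by simp⟩
      have := fac_factor w j (n + 1)
      rwa [fac_succ, h2, (fac_eq_iff _ _ _ _).2 h1.symm] at this
  rw [Set.mem_inter_iff, key, key]
  constructor
  · rintro ⟨⟨j, h1, h2⟩, ⟨j', h1', h2'⟩⟩
    cases hc : w (i + n)
    · exact ⟨j', h1', by simp [hc, h2']⟩
    · exact ⟨j, h1, by simp [hc, h2]⟩
  · rintro ⟨j, h1, h2⟩
    cases hc : w (i + n) <;> rw [hc] at h2
    · exact ⟨⟨i, fun _ _ => rfl, hc⟩, ⟨j, h1, by simpa using h2.symm⟩⟩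
    · exact ⟨⟨j, h1, by simpa using h2.symm⟩, ⟨i, fun _ _ => rfl, hc⟩⟩

lemma mem_rs {n : ℕ} {u : List Bool}
    (h : u ∈ Ex (IsFactorInf w) n false ∩ Ex (IsFactorInf w) n true) :
    ∃ i, u = fac w i n ∧ RSp w i n := by
  have : u ∈ Xn (IsFactorInf w) n := by rw [← Ex_union]; exact Or.inl h.1
  obtain ⟨i, rfl⟩ := (Fn_iff w u n).1 this
  exact ⟨i, rfl, (Ex_inter w n i).1 h⟩

lemma exists_eqw (n : ℕ) (N : ℕ) : ∃ i j, N ≤ i ∧ i < j ∧ EqW w i j n := by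
  have hfin : (Set.range fun i => fac w (N + i) n).Finite :=
    (finite_len n).subset (by rintro _ ⟨i, rfl⟩; simp)
  obtain ⟨i, -, j, -, hne, h⟩ := Set.infinite_univ.exists_ne_map_eq_of_mapsTo
    (f := fun i => fac w (N + i) n) (fun i _ => Set.mem_range_self i) hfin
  have h' : EqW w (N + i) (N + j) n := (fac_eq_iff w _ _ _).1 h
  rcases lt_or_gt_of_ne hne with hl | hl
  · exact ⟨N + i, N + j, by omega, by omega, h'⟩
  · exact ⟨N + j, N + i, by omega, by omega, h'.symm⟩

/-- if windows at `a < b` agree and there is no right special window from `a` on,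
then `w` is ultimately periodic -/
lemma not_aper_of (n a b : ℕ) (hab : a < b) (h : EqW w a b n)
    (hrs : ∀ k, EqW w (a + k) (b + k) n → ¬ RSp w (a + k) n) : ¬ Aper w := by
  intro hA
  have key : ∀ k, EqW w (a + k) (b + k) n := by
    intro k
    induction k with
    | zero => exact h
    | succ k ih =>
      have h1 : w (a + k + n) = w (b + k + n) := by
        by_contra hc
        exact hrs k ih ⟨b + k, ih, hc⟩
      have := (ih.succ h1).suffix 1
      simpa [add_assoc] using this
  have key2 : ∀ k, w (a + k + n) = w (b + k + n) := by
    intro k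
    by_contra hc
    exact hrs k (key k) ⟨b + k, key k, hc⟩
  obtain ⟨x, hx, hne⟩ := hA (a + n) (b - a) (by omega)
  apply hne
  have := key2 (x - a - n)
  rw [show a + (x - a - n) + n = x by omega, show b + (x - a - n) + n = x + (b - a) by omega] at this
  exact this.symm

lemma exists_rs (hA : Aper w) (n : ℕ) : ∃ i, RSp w i n := by
  by_contra hc
  push Not at hc
  obtain ⟨a, b, _, hab, h⟩ := exists_eqw w n 0
  exact not_aper_of w n a b hab h (fun k _ => hc _) hA

lemma le_card (hA : Aper w) (n : ℕ) : n + 1 ≤ (Xn (IsFactorInf w) n).ncard := by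
  induction n with
  | zero =>
    rw [Nat.succ_le_iff, Set.ncard_pos (Xn_finite _ _)]
    exact ⟨_, (Fn_iff w _ 0).2 ⟨0, rfl⟩⟩
  | succ n ih =>
    rw [card_succ, Ex_union]
    have : 0 < (Ex (IsFactorInf w) n false ∩ Ex (IsFactorInf w) n true).ncard := by
      rw [Set.ncard_pos ((Ex_finite _ _ _).inter_of_left _)]
      obtain ⟨i, hi⟩ := exists_rs w hA n
      exact ⟨_, (Ex_inter w n i).2 hi⟩
    omega

lemma factor_infix {A : Type*} (w : ℕ → A) (u v : List A) (hv : IsFactorInf w v) (h : u <:+: v) :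
    IsFactorInf w u := by
  obtain ⟨i, hi⟩ := (factor_iff w v v.length).1 ⟨hv, rfl⟩
  obtain ⟨s, t, rfl⟩ := h
  have := fac_drop_take w i (s ++ u ++ t).length s.length u.length (by simp)
  rw [← hi] at this
  simp at this
  rw [this]
  exact fac_factor _ _ _

def Sym (u : List Bool) : Prop := IsFactorInf w u ∨ IsFactorInf w u.reverse

lemma sym_fac : ∀ u v : List Bool, Sym w v → u <:+: v → Sym w u := by
  rintro u v (h | h) huv
  · exact Or.inl (factor_infix w u v h huv)
  · exact Or.inr (factor_infix w _ _ h (List.reverse_infix.2 huv))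

lemma sym_bal {m : ℕ} (hb : Bal w m) : ∀ u v : List Bool, Sym w u → Sym w v →
    u.length = v.length → u.length ≤ m → u.count true ≤ v.count true + 1 := by
  have key : ∀ u : List Bool, Sym w u → ∃ i, u.count true = cnt w i u.length := by
    rintro u (h | h)
    · obtain ⟨i, hi⟩ := (factor_iff w u u.length).1 ⟨h, rfl⟩
      exact ⟨i, by unfold cnt; rw [← hi]⟩
    · obtain ⟨i, hi⟩ := (factor_iff w u.reverse u.length).1 ⟨h, by simp⟩
      exact ⟨i, by unfold cnt; rw [← hi, List.count_reverse]⟩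
  intro u v hu hv hl hm
  obtain ⟨i, hi⟩ := key u hu
  obtain ⟨j, hj⟩ := key v hv
  rw [hi, hj, ← hl]
  exact hb _ hm i j

lemma sym_eq (hA : Aper w) {m : ℕ} (hb : Bal w m) {n : ℕ} (hn : n ≤ m) :
    Xn (IsFactorInf w) n = Xn (Sym w) n := by
  apply Set.eq_of_subset_of_ncard_le (fun u (hu : u ∈ Xn (IsFactorInf w) n) =>
    (⟨Or.inl hu.1, hu.2⟩ : u ∈ Xn (Sym w) n)) _ (Xn_finite _ _)
  exact (Xn_card_le _ m (sym_fac w) (sym_bal w hb) n hn).trans (le_card w hA n)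

lemma card_le_of_bal {m : ℕ} (hb : Bal w m) {n : ℕ} (hn : n ≤ m) :
    (Xn (IsFactorInf w) n).ncard ≤ n + 1 :=
  (Set.ncard_le_ncard (fun u (hu : u ∈ Xn (IsFactorInf w) n) =>
    (⟨Or.inl hu.1, hu.2⟩ : u ∈ Xn (Sym w) n)) (Xn_finite _ _)).trans
    (Xn_card_le _ m (sym_fac w) (sym_bal w hb) n hn)

lemma rs_unique {m : ℕ} (hb : Bal w m) {n : ℕ} (hn : n + 1 ≤ m) {i j : ℕ}
    (hi : RSp w i n) (hj : RSp w j n) : EqW w i j n := by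
  rw [← fac_eq_iff]
  apply Xn_unique_rs (Sym w) m (sym_fac w) (sym_bal w hb) n hn
  · have := (Ex_inter w n i).2 hi
    exact ⟨⟨Or.inl this.1.1, this.1.2⟩, ⟨Or.inl this.2.1, this.2.2⟩⟩
  · have := (Ex_inter w n j).2 hj
    exact ⟨⟨Or.inl this.1.1, this.1.2⟩, ⟨Or.inl this.2.1, this.2.2⟩⟩

lemma rev_closed (hA : Aper w) {m : ℕ} (hb : Bal w m) {n : ℕ} (hn : n ≤ m) (i : ℕ) :
    ∃ j, ∀ k < n, w (j + k) = w (i + (n - 1 - k)) := by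
  have : (fac w i n).reverse ∈ Xn (IsFactorInf w) n := by
    rw [sym_eq w hA hb hn]
    exact ⟨Or.inr (by rw [List.reverse_reverse]; exact fac_factor _ _ _), by simp⟩
  obtain ⟨j, hj⟩ := (Fn_iff w _ n).1 this
  refine ⟨j, fun k hk => ?_⟩
  have h1 := getElem_fac w j n k (by simpa using hk)
  rw [← h1]
  have h2 : (fac w j n)[k]'(by simpa using hk) = (fac w i n).reverse[k]'(by simpa using hk) := by
    congr 1; exact hj.symm
  rw [h2, List.getElem_reverse, getElem_fac, length_fac]

lemma recur (hA : Aper w) {m : ℕ} (hb : Bal w m) {n : ℕ} (hn : n ≤ m) (i : ℕ) :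
    ∃ j, 1 ≤ j ∧ EqW w i j n := by
  have hs : ∀ i n, fac (fun x => w (x + 1)) i n = fac w (i + 1) n := fun i n => by
    simp [fac, Nat.add_right_comm]
  have hA' : Aper (fun x => w (x + 1)) := by
    intro N p hp
    obtain ⟨x, hx, hne⟩ := hA (N + 1) p hp
    refine ⟨x - 1, by omega, ?_⟩
    show w (x - 1 + p + 1) ≠ w (x - 1 + 1)
    rwa [show x - 1 + p + 1 = x + p by omega, show x - 1 + 1 = x by omega]
  have : Xn (IsFactorInf fun x => w (x + 1)) n = Xn (IsFactorInf w) n := by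
    apply Set.eq_of_subset_of_ncard_le _ _ (Xn_finite _ _)
    · intro u hu
      obtain ⟨j, hj⟩ := (Fn_iff _ u n).1 hu
      exact (Fn_iff _ u n).2 ⟨j + 1, by rw [hj, hs]⟩
    · exact (card_le_of_bal w hb hn).trans (le_card _ hA' n)
  have h1 : fac w i n ∈ Xn (IsFactorInf w) n := (Fn_iff w _ n).2 ⟨i, rfl⟩
  rw [← this] at h1
  obtain ⟨j, hj⟩ := (Fn_iff _ _ n).1 h1
  rw [hs] at hj
  exact ⟨j + 1, by omega, (fac_eq_iff _ _ _ _).1 hj⟩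

lemma follow {m : ℕ} (hb : Bal w m) {i q h L : ℕ} (hL : L ≤ m) (hqh : q ≤ h)
    (hrs : RSp w i h) (hno : ∀ d, 0 < d → d < L - q → ¬ EqW w i (i + d) q) (j : ℕ) :
    ∀ n, h + 1 ≤ n → n ≤ L → EqW w j i (h + 1) → EqW w j i n := by
  intro n hn
  induction n, hn using Nat.le_induction with
  | base => intro _ h; exact h
  | succ n hn ih =>
    intro hnL hj
    have h1 := ih (by omega) hj
    apply h1.succ
    by_contra hc
    have hr : RSp w i n := ⟨j, h1.symm, fun h => hc h.symm⟩
    have hr2 := hr.suffix (n - h) (by omega)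
    rw [show n - (n - h) = h by omega] at hr2
    have := rs_unique w hb (by omega) hrs hr2
    exact hno (n - h) (by omega) (by omega) (this.mono hqh)

lemma bool_seq (T : ℕ → Bool) (a : Bool) (h : ¬ ∃ k, T k = a ∧ T (k + 1) = !a) :
    ∃ K c, ∀ k ≥ K, T k = c := by
  by_cases hx : ∃ k, T k = a
  · obtain ⟨K, hK⟩ := hx
    refine ⟨K, a, fun k hk => ?_⟩
    induction k, hk using Nat.le_induction with
    | base => exact hK
    | succ k _ ih =>
      by_contra hc
      exact h ⟨k, ih, by revert hc; cases a <;> cases T (k + 1) <;> simp⟩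
  · push Not at hx
    refine ⟨0, !a, fun k _ => ?_⟩
    have := hx k
    revert this; cases a <;> cases T k <;> simp

/-- complete first returns to palindromes are palindromes -/
lemma cfr_pal (hA : Aper w) {m : ℕ} (hb : Bal w m) {i q L : ℕ} (hL : L ≤ m) (hq : q < L)
    (hpal : PalW w i q) (hE : EqW w i (i + (L - q)) q)
    (hno : ∀ d, 0 < d → d < L - q → ¬ EqW w i (i + d) q) : PalW w i L := by
  by_contra hnp
  have hex : ∃ h, h < L ∧ w (i + h) ≠ w (i + (L - 1 - h)) := by
    unfold PalW at hnp; push Not at hnp; exact hnp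
  classical
  obtain ⟨h, ⟨hhL, hne⟩, hmin⟩ : ∃ h, (h < L ∧ w (i + h) ≠ w (i + (L - 1 - h))) ∧
      ∀ k < h, w (i + k) = w (i + (L - 1 - k)) := by
    refine ⟨Nat.find hex, Nat.find_spec hex, fun k hk => ?_⟩
    have := Nat.find_min hex hk
    by_contra hc
    exact this ⟨by have := (Nat.find_spec hex).1; omega, hc⟩
  have hqh : q ≤ h := by
    by_contra hc
    apply hne
    have h1 := hE (q - 1 - h) (by omega)
    rw [show i + (L - q) + (q - 1 - h) = i + (L - 1 - h) by omega] at h1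
    rw [← h1]
    exact hpal h (by omega)
  have hh2 : 2 * h + 2 ≤ L := by
    by_contra hc
    rcases Nat.lt_or_ge (L - 1 - h) h with h1 | h1
    · have := hmin _ h1
      rw [show L - 1 - (L - 1 - h) = h by omega] at this
      exact hne this.symm
    · exact hne (by congr 2; omega)
  obtain ⟨j, hj⟩ := rev_closed w hA hb hL i
  have hij : EqW w i j h := fun k hk => by rw [hj k (by omega)]; exact hmin k hk
  have hrsi : RSp w i h := ⟨j, hij, by rw [hj h hhL]; exact hne⟩
  have hrsj : RSp w j h := hrsi.congr hij.symm
  have hnoj : ∀ d, 0 < d → d < L - q → ¬ EqW w j (j + d) q := by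
    intro d hd hdL he
    apply hno (L - q - d) (by omega) (by omega)
    intro k hk
    have h1 := he (q - 1 - k) (by omega)
    have h2 := hij (q - 1 - k) (by omega)
    have h3 := hj (d + (q - 1 - k)) (by omega)
    rw [show L - 1 - (d + (q - 1 - k)) = L - q - d + k by omega, ← add_assoc, ← add_assoc] at h3
    rw [← h3, ← h1, ← h2]
    exact hpal k hk
  -- every occurrence of the palindrome is followed by the return word or its reversal
  have hA1 : ∀ x, EqW w x i q → EqW w x i L ∨ EqW w x j L := by
    intro x hx
    have h1 : ∀ n, q ≤ n → n ≤ h → EqW w x i n := by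
      intro n hn
      induction n, hn using Nat.le_induction with
      | base => intro _; exact hx
      | succ n hn ih =>
        intro hnh
        have h1 := ih (by omega)
        apply h1.succ
        by_contra hc
        have hr : RSp w i n := ⟨x, h1.symm, fun h => hc h.symm⟩
        have hr2 := hrsi.suffix (h - n) (by omega)
        rw [show h - (h - n) = n by omega] at hr2
        have := rs_unique w hb (by omega) hr hr2
        exact hno (h - n) (by omega) (by omega) (this.mono hn)
    have h2 := h1 h hqh le_rfl
    by_cases hc : w (x + h) = w (i + h)
    · left
      exact follow w hb hL hqh hrsi hno x L (by omega) le_rfl (h2.succ hc)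
    · right
      refine follow w hb hL hqh hrsj hnoj x L (by omega) le_rfl ((h2.trans hij).succ ?_)
      have : w (i + h) ≠ w (j + h) := by rw [hj h hhL]; exact hne
      revert hc this
      cases w (x + h) <;> cases w (i + h) <;> cases w (j + h) <;> simp
  set p := L - q with hp
  have hocc : ∀ k, EqW w (i + k * p) i q := by
    intro k
    induction k with
    | zero => simp; exact fun _ _ => rfl
    | succ k ih =>
      intro y hy
      rcases hA1 _ ih with h1 | h1
      · have := h1 (p + y) (by omega)
        rw [show i + (k + 1) * p + y = i + k * p + (p + y) by ring, this, ← add_assoc]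
        exact (hE y hy).symm
      · have := h1 (p + y) (by omega)
        rw [show i + (k + 1) * p + y = i + k * p + (p + y) by ring, this, hj _ (by omega),
          show L - 1 - (p + y) = q - 1 - y by omega]
        exact (hpal y hy).symm
  have hpre : ∀ k x, x < h → w (i + k * p + x) = w (i + x) := by
    intro k x hx
    rcases hA1 _ (hocc k) with h1 | h1
    · exact h1 x (by omega)
    · rw [h1 x (by omega)]; exact (hij x hx).symm
  have hsuf : ∀ k x, x < h → w (i + k * p + (L - 1 - x)) = w (i + x) := by
    intro k x hx
    rcases hA1 _ (hocc k) with h1 | h1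
    · rw [h1 _ (by omega)]; exact (hmin x hx).symm
    · rw [h1 _ (by omega), hj _ (by omega), show L - 1 - (L - 1 - x) = x by omega]
  have hmis : ∀ k, w (i + k * p + (L - 1 - h)) = !(w (i + k * p + h)) := by
    intro k
    have : w (i + k * p + (L - 1 - h)) ≠ w (i + k * p + h) := by
      rcases hA1 _ (hocc k) with h1 | h1
      · rw [h1 _ (by omega), h1 _ (by omega)]; exact hne.symm
      · rw [h1 _ (by omega), hj _ (by omega), show L - 1 - (L - 1 - h) = h by omega,
          h1 _ hhL, hj _ hhL]
        exact hne
    revert this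
    cases w (i + k * p + (L - 1 - h)) <;> cases w (i + k * p + h) <;> simp
  -- interior of the window around a transition
  have hinter : ∀ k x, x < 2 * h - q → w (i + k * p + (L - 1 - h) + 1 + x) =
      if x < h then w (i + (h - 1 - x)) else w (i + (q + x - h)) := by
    intro k x hx
    split
    · rename_i hxh
      rw [show i + k * p + (L - 1 - h) + 1 + x = i + k * p + (L - 1 - (h - 1 - x)) by omega]
      exact hsuf k _ (by omega)
    · rename_i hxh
      have : i + k * p + (L - 1 - h) + 1 + x = i + (k + 1) * p + (q + x - h) := by
        rw [add_mul, one_mul]; omega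
      rw [this]
      exact hpre (k + 1) _ (by omega)
  have hend : ∀ k, i + k * p + (L - 1 - h) + (2 * h - q + 1) = i + (k + 1) * p + h := by
    intro k; rw [add_mul, one_mul]; omega
  have hev : ∃ K c, ∀ k ≥ K, w (i + k * p + h) = c := by
    by_cases h1 : ∃ k, w (i + k * p + h) = true ∧ w (i + (k + 1) * p + h) = !true
    · by_cases h2 : ∃ k, w (i + k * p + h) = false ∧ w (i + (k + 1) * p + h) = !false
      · exfalso
        obtain ⟨k, h1, h1'⟩ := h1
        obtain ⟨l, h2, h2'⟩ := h2
        refine no_unb w hb (2 * h - q) (i + k * p + (L - 1 - h)) (i + l * p + (L - 1 - h))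
          (by omega) false ?_ ?_ ?_ ?_ ?_
        · intro x hx
          rw [hinter k x hx, hinter l x hx]
        · rw [hmis, h1]; rfl
        · rw [hend, h1']; rfl
        · rw [hmis, h2]
        · rw [hend, h2']
      · exact bool_seq (fun k => w (i + k * p + h)) false h2
    · exact bool_seq (fun k => w (i + k * p + h)) true h1
  obtain ⟨K, c, hK⟩ := hev
  have hwin : ∀ k ≥ K, EqW w (i + k * p) (i + (k + 1) * p) L := by
    intro k hk
    have e1 := hK k hk
    have e2 := hK (k + 1) (by omega)
    have hd : w (i + h) ≠ w (j + h) := by rw [hj h hhL]; exact hne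
    rcases hA1 _ (hocc k) with h1 | h1 <;> rcases hA1 _ (hocc (k + 1)) with h2 | h2
    · exact h1.trans h2.symm
    · exact absurd (by rw [← h1 h hhL, ← h2 h hhL, e1, e2]) hd
    · exact absurd (by rw [← h1 h hhL, ← h2 h hhL, e1, e2]) hd
    · exact h1.trans h2.symm
  have hp0 : 0 < p := by omega
  obtain ⟨x, hx, hxne⟩ := hA (i + K * p) p hp0
  apply hxne
  have hk : K ≤ (x - i) / p := by
    rw [Nat.le_div_iff_mul_le hp0]; omega
  have hdm := Nat.div_add_mod (x - i) p
  have hmod := Nat.mod_lt (x - i) hp0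
  have := hwin _ hk ((x - i) % p) (by omega)
  rw [mul_comm] at hdm
  rw [add_mul, one_mul] at this
  rw [show i + (x - i) / p * p + (x - i) % p = x by omega,
    show i + ((x - i) / p * p + p) + (x - i) % p = x + p by omega] at this
  exact this.symm

lemma priv_pal (hA : Aper w) {m : ℕ} (hb : Bal w m) (n : ℕ) :
    ∀ i, n ≤ m → Privileged (fac w i n) → PalW w i n := by
  induction n using Nat.strong_induction_on with
  | _ n ih =>
    intro i hn hp
    rcases Nat.lt_or_ge n 2 with h | h
    · intro k hk
      congr 2; omega
    · obtain ⟨q, hq, hpq, h1, h2⟩ := priv_cases w i n h hp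
      exact cfr_pal w hA hb hn hq (ih q hq i (by omega) hpq) h1 h2

lemma pal_priv (hA : Aper w) {m : ℕ} (hb : Bal w m) (n : ℕ) :
    ∀ i, n ≤ m + 1 → PalW w i n → Privileged (fac w i n) := by
  induction n using Nat.strong_induction_on with
  | _ n ih =>
    intro i hn hp
    rcases Nat.lt_or_ge n 2 with h | h
    · exact priv_le_one w i n (by omega)
    classical
    have h0 : PalW w i 0 := fun k hk => by omega
    have hs := Nat.findGreatest_spec (P := fun q => PalW w i q) (Nat.zero_le (n - 1)) h0
    have hg : ∀ k, Nat.findGreatest (fun q => PalW w i q) (n - 1) < k → k ≤ n - 1 → ¬ PalW w i k :=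
      fun k => Nat.findGreatest_is_greatest
    have hle := Nat.findGreatest_le (P := fun q => PalW w i q) (n - 1)
    generalize Nat.findGreatest (fun q => PalW w i q) (n - 1) = q at hs hg hle
    refine priv_mk w i n q h (by omega) (ih q (by omega) i (by omega) hs) ?_ ?_
    · intro k hk
      have h1 := hp (q - 1 - k) (by omega)
      rw [show i + (n - q) + k = i + (n - 1 - (q - 1 - k)) by omega, ← h1]
      exact hs k hk
    · intro d
      induction d using Nat.strong_induction_on with
      | _ d ihd =>
        intro hd hdn he
        refine hg (d + q) (by omega) (by omega) ?_
        refine cfr_pal w hA hb (q := q) (by omega) (by omega) hs ?_ ?_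
        · rwa [show d + q - q = d by omega]
        · intro e he0 hed
          exact ihd e (by omega) he0 (by omega)

lemma pal_ext (hA : Aper w) {m : ℕ} (hb : Bal w m) {n : ℕ} (hn : n + 1 ≤ m) (i : ℕ)
    (hp : PalW w i n) : ∃ j, PalW w j (n + 2) ∧ EqW w i (j + 1) n := by
  have mk : ∀ j, EqW w i (j + 1) n → w j = w (j + (n + 1)) → PalW w j (n + 2) := by
    intro j hj hw k hk
    rcases Nat.eq_zero_or_pos k with rfl | hk0
    · exact hw
    rcases Nat.lt_or_ge k (n + 1) with hk1 | hk1
    · have h1 := hj (k - 1) (by omega)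
      have h2 := hj (n - 1 - (k - 1)) (by omega)
      have h3 := hp (k - 1) (by omega)
      rw [show j + k = j + 1 + (k - 1) by omega,
        show j + (n + 2 - 1 - k) = j + 1 + (n - 1 - (k - 1)) by omega, ← h1, ← h2, h3]
    · have : k = n + 1 := by omega
      subst this
      rw [show n + 2 - 1 - (n + 1) = 0 by omega]
      exact hw.symm
  by_cases hrs : RSp w i n
  · obtain ⟨z, hz⟩ := exists_rs w hA (n + 1)
    have hz1 := hz.suffix 1 (by omega)
    rw [show n + 1 - 1 = n by omega] at hz1
    have h1 := rs_unique w hb hn hrs hz1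
    obtain ⟨z', hE, hne⟩ := hz
    by_cases hc : w z = w (z + (n + 1))
    · exact ⟨z, mk z h1 hc, h1⟩
    · have hE1 := hE.suffix 1
      rw [show n + 1 - 1 = n by omega] at hE1
      have h2 := h1.trans hE1
      refine ⟨z', mk z' h2 ?_, h2⟩
      have h3 := hE 0 (by omega)
      simp only [add_zero] at h3
      rw [← h3]
      revert hc hne
      cases w z <;> cases w (z + (n + 1)) <;> cases w (z' + (n + 1)) <;> simp
  · obtain ⟨i1, hi1, hE⟩ := recur w hA hb (n := n) (by omega) i
    obtain ⟨j, rfl⟩ : ∃ j, i1 = j + 1 := ⟨i1 - 1, by omega⟩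
    refine ⟨j, mk j hE ?_, hE⟩
    by_contra hc
    apply hrs
    obtain ⟨l, hl⟩ := rev_closed w hA hb hn j
    have hr : RSp w (j + 1) n := by
      refine ⟨l, fun k hk => ?_, ?_⟩
      · rw [hl k (by omega), show j + (n + 1 - 1 - k) = j + 1 + (n - 1 - k) by omega,
          ← hE k hk, ← hE _ (by omega)]
        exact hp k hk
      · rw [hl n (by omega), show n + 1 - 1 - n = 0 by omega,
          show j + 1 + n = j + (n + 1) by omega]
        exact fun h => hc h.symm
    exact hr.congr hE

lemma aper_letter (hA : Aper w) (a : Bool) : ∃ i, w i = a := by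
  by_contra hc
  push Not at hc
  obtain ⟨x, _, hx⟩ := hA 0 1 one_pos
  have h1 := hc x
  have h2 := hc (x + 1)
  revert hx h1 h2
  cases w x <;> cases w (x + 1) <;> cases a <;> simp

lemma pal_odd (hA : Aper w) {m : ℕ} (hb : Bal w m) (a : Bool) (k : ℕ) (hk : 2 * k ≤ m) :
    ∃ i, PalW w i (2 * k + 1) ∧ w (i + k) = a := by
  induction k with
  | zero =>
    obtain ⟨i, hi⟩ := aper_letter w hA a
    exact ⟨i, fun k hk => by congr 2; omega, hi⟩
  | succ k ih =>
    obtain ⟨i, hi, hc⟩ := ih (by omega)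
    obtain ⟨j, hj, hE⟩ := pal_ext w hA hb (n := 2 * k + 1) (by omega) i hi
    refine ⟨j, hj, ?_⟩
    have := hE k (by omega)
    rw [show j + (k + 1) = j + 1 + k by omega, ← this, hc]

lemma pal_even (hA : Aper w) {m : ℕ} (hb : Bal w m) (k : ℕ) (hk : 2 * k ≤ m + 1) :
    ∃ i, PalW w i (2 * k) := by
  induction k with
  | zero => exact ⟨0, fun k hk => by omega⟩
  | succ k ih =>
    obtain ⟨i, hi⟩ := ih (by omega)
    obtain ⟨j, hj, hE⟩ := pal_ext w hA hb (n := 2 * k) (by omega) i hi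
    exact ⟨j, hj⟩

lemma pal_inner {i n : ℕ} (h : PalW w i (n + 2)) : PalW w (i + 1) n := by
  intro k hk
  have := h (k + 1) (by omega)
  rw [show i + 1 + k = i + (k + 1) by omega, this]
  congr 1; omega

lemma pal_unique_step {m : ℕ} (hb : Bal w m) {i j n : ℕ} (hn : n + 2 ≤ m)
    (hi : PalW w i (n + 2)) (hj : PalW w j (n + 2)) (hE : EqW w (i + 1) (j + 1) n) :
    EqW w i j (n + 2) := by
  have h1 := hi 0 (by omega)
  have h2 := hj 0 (by omega)
  simp only [add_zero, show n + 2 - 1 - 0 = n + 1 by omega] at h1 h2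
  have h3 : w i = w j := by
    by_contra hc
    have hc' : w j = !(w i) := by revert hc; cases w i <;> cases w j <;> simp
    exact no_unb w hb n i j hn (w i) hE rfl h1.symm hc' (by rw [← h2, hc'])
  intro k hk
  rcases Nat.eq_zero_or_pos k with rfl | hk0
  · exact h3
  rcases Nat.lt_or_ge k (n + 1) with hk1 | hk1
  · have := hE (k - 1) (by omega)
    rwa [show i + 1 + (k - 1) = i + k by omega, show j + 1 + (k - 1) = j + k by omega] at this
  · have : k = n + 1 := by omega
    subst this
    rw [← h1, ← h2, h3]

lemma pal_unique_odd {m : ℕ} (hb : Bal w m) (k : ℕ) : ∀ i j, 2 * k + 1 ≤ m →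
    PalW w i (2 * k + 1) → PalW w j (2 * k + 1) → w (i + k) = w (j + k) →
    EqW w i j (2 * k + 1) := by
  induction k with
  | zero =>
    intro i j _ _ _ h x hx
    have : x = 0 := by omega
    subst this; exact h
  | succ k ih =>
    intro i j hm hi hj hc
    refine pal_unique_step w hb hm hi hj (ih _ _ (by omega) (pal_inner w hi) (pal_inner w hj) ?_)
    rwa [show i + 1 + k = i + (k + 1) by omega, show j + 1 + k = j + (k + 1) by omega]

lemma pal_unique_even {m : ℕ} (hb : Bal w m) (k : ℕ) : ∀ i j, 2 * k ≤ m →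
    PalW w i (2 * k) → PalW w j (2 * k) → EqW w i j (2 * k) := by
  induction k with
  | zero => intro i j _ _ _ x hx; omega
  | succ k ih =>
    intro i j hm hi hj
    exact pal_unique_step w hb hm hi hj (ih _ _ (by omega) (pal_inner w hi) (pal_inner w hj))

lemma min_unb (h : ¬ ∀ m, Bal w m) : ∃ n i j, Bal w (n + 1) ∧ w i = true ∧
    w (i + (n + 1)) = true ∧ w j = false ∧ w (j + (n + 1)) = false ∧
    EqW w (i + 1) (j + 1) n ∧ PalW w (i + 1) n := by
  have hex : ∃ M i j, cnt w j M + 1 < cnt w i M := by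
    by_contra hc
    push Not at hc
    exact h fun m n _ i j => hc n i j
  classical
  obtain ⟨M, ⟨i, j, hM⟩, hmin⟩ : ∃ M, (∃ i j, cnt w j M + 1 < cnt w i M) ∧
      ∀ k < M, ∀ x y, cnt w x k ≤ cnt w y k + 1 := by
    refine ⟨Nat.find hex, Nat.find_spec hex, fun k hk x y => ?_⟩
    have := Nat.find_min hex hk
    push Not at this
    exact this x y
  have hM2 : 2 ≤ M := by
    by_contra hc
    have : M = 0 ∨ M = 1 := by omega
    rcases this with rfl | rfl
    · simp [cnt, fac] at hM
    · rw [cnt_one, cnt_one] at hM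
      have := Bool.toNat_le (w i)
      omega
  have hd : ∀ k, 1 ≤ k → k < M → cnt w i k = cnt w j k + 1 ∧ cnt w i M = cnt w j M + 2 := by
    intro k hk hkM
    have h1 := hmin k hkM i j
    have h2 := hmin (M - k) (by omega) (i + k) (j + k)
    have h3 := cnt_add w i k (M - k)
    have h4 := cnt_add w j k (M - k)
    rw [show k + (M - k) = M by omega] at h3 h4
    omega
  have hG : ∀ k, 1 ≤ k → k < M → cnt w i k + cnt w j (M - k) = cnt w j M + 1 := by
    intro k hk hkM
    have h1 := hmin k hkM i (j + (M - k))
    have h2 := hmin k hkM (i + (M - k)) j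
    have h3 := cnt_add w i (M - k) k
    have h4 := cnt_add w j (M - k) k
    rw [show M - k + k = M by omega] at h3 h4
    have h5 := hd k hk hkM
    have h6 := hd (M - k) (by omega) (by omega)
    omega
  obtain ⟨n, rfl⟩ : ∃ n, M = n + 2 := ⟨M - 2, by omega⟩
  have tn : ∀ a b : Bool, a.toNat = b.toNat + 1 → a = true ∧ b = false := by
    intro a b; cases a <;> cases b <;> simp
  have tn' : ∀ a b : Bool, a.toNat = b.toNat → a = b := by
    intro a b; cases a <;> cases b <;> simp
  have hfirst := tn (w i) (w j) (by
    have := (hd 1 le_rfl (by omega)).1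
    rwa [cnt_one, cnt_one] at this)
  have hlast := tn (w (i + (n + 1))) (w (j + (n + 1))) (by
    have h1 := hd (n + 1) (by omega) (by omega)
    have h2 : cnt w i (n + 2) = _ := cnt_succ w i (n + 1)
    have h3 : cnt w j (n + 2) = _ := cnt_succ w j (n + 1)
    omega)
  have hE : EqW w (i + 1) (j + 1) n := by
    intro k hk
    have h1 := (hd (k + 1) (by omega) (by omega)).1
    have h2 := (hd (k + 2) (by omega) (by omega)).1
    have h3 : cnt w i (k + 2) = _ := cnt_succ w i (k + 1)
    have h4 : cnt w j (k + 2) = _ := cnt_succ w j (k + 1)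
    apply tn'
    rw [show i + 1 + k = i + (k + 1) by omega, show j + 1 + k = j + (k + 1) by omega]
    omega
  refine ⟨n, i, j, fun k hk x y => hmin k (by omega) x y, hfirst.1, hlast.1, hfirst.2, hlast.2,
    hE, ?_⟩
  intro k hk
  rw [hE (n - 1 - k) (by omega)]
  have h1 := hG (k + 1) (by omega) (by omega)
  have h2 := hG (k + 2) (by omega) (by omega)
  have h3 : cnt w i (k + 2) = _ := cnt_succ w i (k + 1)
  have h4 := cnt_succ w j (n - k)
  rw [show n + 2 - (k + 1) = n - k + 1 by omega] at h1
  rw [show n + 2 - (k + 2) = n - k by omega] at h2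
  apply tn'
  rw [show i + 1 + k = i + (k + 1) by omega, show j + 1 + (n - 1 - k) = j + (n - k) by omega]
  omega

lemma per_first {N p : ℕ} (hp : 0 < p) (h : ∀ x ≥ N, w (x + p) = w x) (n i : ℕ) :
    ∃ i' < N + p, EqW w i i' n := by
  induction i using Nat.strong_induction_on with
  | _ i ih =>
    rcases Nat.lt_or_ge i (N + p) with h1 | h1
    · exact ⟨i, h1, fun _ _ => rfl⟩
    · obtain ⟨i', hi', hE⟩ := ih (i - p) (by omega)
      refine ⟨i', hi', EqW.trans (fun k _ => ?_) hE⟩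
      rw [← h (i - p + k) (by omega)]
      congr 1; omega

lemma not_aper_iff (h : ¬ Aper w) : ∃ N p, 0 < p ∧ ∀ x ≥ N, w (x + p) = w x := by
  unfold Aper at h
  push Not at h
  exact h

lemma sturm_aper (hS : ∀ n, (Xn (IsFactorInf w) n).ncard = n + 1) : Aper w := by
  by_contra hc
  obtain ⟨N, p, hp, h⟩ := not_aper_iff w hc
  have hsub : Xn (IsFactorInf w) (N + p) ⊆ Set.image (fun i => fac w i (N + p)) (Set.Iio (N + p)) := by
    intro u hu
    obtain ⟨i, rfl⟩ := (Fn_iff w u _).1 hu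
    obtain ⟨i', hi', hE⟩ := per_first w hp h (N + p) i
    exact ⟨i', hi', ((fac_eq_iff w _ _ _).2 hE).symm⟩
  have h1 := Set.ncard_le_ncard hsub ((Set.finite_Iio _).image _)
  have h2 := Set.ncard_image_le (f := fun i => fac w i (N + p)) (Set.finite_Iio (N + p))
  have h3 : (Set.Iio (N + p)).ncard = N + p := by
    rw [← Finset.coe_Iio, Set.ncard_coe_finset]; simp
  rw [hS] at h1
  omega

lemma rs_unique_S (hS : ∀ n, (Xn (IsFactorInf w) n).ncard = n + 1) {n i j : ℕ}
    (hi : RSp w i n) (hj : RSp w j n) : EqW w i j n := by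
  have h := card_succ (IsFactorInf w) n
  rw [Ex_union, hS, hS] at h
  have h1 : (Ex (IsFactorInf w) n false ∩ Ex (IsFactorInf w) n true).ncard ≤ 1 := by omega
  rw [Set.ncard_le_one_iff ((Ex_finite _ _ _).inter_of_left _)] at h1
  rw [← fac_eq_iff]
  exact h1 ((Ex_inter w n i).2 hi) ((Ex_inter w n j).2 hj)

lemma sturm_bal (hS : ∀ n, (Xn (IsFactorInf w) n).ncard = n + 1) : ∀ m, Bal w m := by
  by_contra hnb
  have hA := sturm_aper w hS
  obtain ⟨n, i, j, -, hi, hi', hj, hj', hE, hP⟩ := min_unb w hnb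
  obtain ⟨z, hz⟩ := exists_rs w hA (n + 1)
  have hz1 := hz.suffix 1 (by omega)
  rw [show n + 1 - 1 = n by omega] at hz1
  have hrs : RSp w (i + 1) n := ⟨j + 1, hE, by
    rw [show i + 1 + n = i + (n + 1) by omega, show j + 1 + n = j + (n + 1) by omega, hi', hj']
    simp⟩
  have hu := rs_unique_S w hS hrs hz1
  obtain ⟨x, hx1, hx2, hx3, hx4⟩ : ∃ x, w x ≠ w z ∧ w (x + (n + 1)) = w x ∧
      EqW w (x + 1) (z + 1) n ∧ PalW w (x + 1) n := by
    cases hwz : w z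
    · exact ⟨i, by simp [hi], by rw [hi, hi'], hu, hP⟩
    · refine ⟨j, by simp [hj], by rw [hj, hj'], hE.symm.trans hu, fun k hk => ?_⟩
      rw [← hE k hk, ← hE _ (by omega)]
      exact hP k hk
  have hnz : ∀ d ≤ n + 1, ¬ EqW w (x + d) z (n + 1) := by
    intro d hd he
    have h0 := he 0 (by omega)
    simp only [add_zero] at h0
    rcases Nat.eq_zero_or_pos d with rfl | hd0
    · exact hx1 h0
    rcases Nat.lt_or_ge d (n + 1) with hd1 | hd1
    · have h1 := he (n + 1 - d) (by omega)
      rw [show x + d + (n + 1 - d) = x + (n + 1) by omega, hx2] at h1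
      have h2 := hx3 (n - d) (by omega)
      rw [show z + 1 + (n - d) = z + (n + 1 - d) by omega, ← h1] at h2
      have h3 := hx4 (n - d) (by omega)
      rw [h2, show x + 1 + (n - 1 - (n - d)) = x + d by omega, h0] at h3
      exact hx1 h3
    · have : d = n + 1 := by omega
      subst this
      rw [hx2] at h0
      exact hx1 h0
  obtain ⟨a, b, hxa, hab, hbx, hEab⟩ : ∃ a b, x ≤ a ∧ a < b ∧ b ≤ x + (n + 1) ∧
      EqW w a b (n + 1) := by
    have hfin := Xn_finite (IsFactorInf w) (n + 1)
    have hcard : (Xn (IsFactorInf w) (n + 1) \ {fac w z (n + 1)}).ncard < (Set.Iio (n + 2)).ncard := by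
      have h3 : (Set.Iio (n + 2)).ncard = n + 2 := by
        rw [← Finset.coe_Iio, Set.ncard_coe_finset]; simp
      rw [Set.ncard_sdiff_singleton_of_mem ((Fn_iff w _ _).2 ⟨z, rfl⟩), hS, h3]
      omega
    obtain ⟨c, hc, d, hd, hcd, he⟩ := Set.exists_ne_map_eq_of_ncard_lt_of_maps_to hcard
      (f := fun d => fac w (x + d) (n + 1)) (by
        intro d hd
        refine ⟨(Fn_iff w _ _).2 ⟨_, rfl⟩, fun h => ?_⟩
        have hd' : d < n + 2 := hd
        exact hnz d (by omega) ((fac_eq_iff w _ _ _).1 h)) (hfin.sdiff)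
    have hc' : c < n + 2 := hc
    have hd' : d < n + 2 := hd
    have he' := (fac_eq_iff w _ _ _).1 he
    rcases lt_or_gt_of_ne hcd with hl | hl
    · exact ⟨x + c, x + d, by omega, by omega, by omega, he'⟩
    · exact ⟨x + d, x + c, by omega, by omega, by omega, he'.symm⟩
  have key : ∀ k, EqW w (a + k) (b + k) (n + 1) ∧ ¬ EqW w (a + k) z (n + 1) := by
    intro k
    induction k using Nat.strong_induction_on with
    | _ k ih =>
      constructor
      · rcases Nat.eq_zero_or_pos k with rfl | hk
        · exact hEab
        · obtain ⟨h1, h2⟩ := ih (k - 1) (by omega)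
          have h3 : w (a + (k - 1) + (n + 1)) = w (b + (k - 1) + (n + 1)) := by
            by_contra hc
            exact h2 (rs_unique_S w hS ⟨_, h1, hc⟩ hz)
          have := (h1.succ h3).suffix 1
          rwa [show a + (k - 1) + 1 = a + k by omega, show b + (k - 1) + 1 = b + k by omega,
            show n + 1 + 1 - 1 = n + 1 by omega] at this
      · rcases Nat.lt_or_ge (x + (n + 1)) (a + k) with hl | hl
        · obtain ⟨h1, h2⟩ := ih (k - (b - a)) (by omega)
          rw [show b + (k - (b - a)) = a + k by omega] at h1
          exact fun h => h2 (h1.trans h)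
        · have := hnz (a + k - x) (by omega)
          rwa [show x + (a + k - x) = a + k by omega] at this
  exact not_aper_of w (n + 1) a b hab hEab
    (fun k _ hr => (key k).2 (rs_unique_S w hS hr hz)) hA

lemma priv_set (n : ℕ) : {u : List Bool | IsFactorInf w u ∧ Privileged u ∧ u.length = n} =
    {u | ∃ i, u = fac w i n ∧ Privileged (fac w i n)} := by
  ext u
  constructor
  · rintro ⟨h1, h2, h3⟩
    obtain ⟨i, rfl⟩ := (factor_iff w u n).1 ⟨h1, h3⟩
    exact ⟨i, rfl, h2⟩
  · rintro ⟨i, rfl, h⟩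
    exact ⟨fac_factor _ _ _, h, by simp⟩

lemma priv_aper (h : ∀ n, privComplexityInf w n = if Even n then 1 else 2) : Aper w := by
  by_contra hc
  obtain ⟨N, p, hp, hper⟩ := not_aper_iff w hc
  let P : ℕ → Set (List Bool) := fun L => {u | IsFactorInf w u ∧ Privileged u ∧ u.length < L}
  have hfin : ∀ L, (P L).Finite := fun L =>
    (List.finite_length_lt Bool L).subset fun u hu => hu.2.2
  have hstep : ∀ L, (P (L + 1)).ncard = (P L).ncard + if Even L then 1 else 2 := by
    intro L
    have hs : P (L + 1) = P L ∪ {u | IsFactorInf w u ∧ Privileged u ∧ u.length = L} := by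
      ext u
      constructor
      · rintro ⟨h1, h2, h3⟩
        rcases Nat.lt_succ_iff_lt_or_eq.1 h3 with h4 | h4
        · exact Or.inl ⟨h1, h2, h4⟩
        · exact Or.inr ⟨h1, h2, h4⟩
      · rintro (⟨h1, h2, h3⟩ | ⟨h1, h2, h3⟩)
        · exact ⟨h1, h2, by omega⟩
        · exact ⟨h1, h2, by omega⟩
    rw [hs, Set.ncard_union_eq _ (hfin L) ((finite_len L).subset fun u hu => hu.2.2)]
    · rw [← h L]; rfl
    · rw [Set.disjoint_left]
      rintro u ⟨_, _, h1⟩ ⟨_, _, h2⟩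
      omega
  have hcard : ∀ K, (P (2 * K)).ncard = 3 * K := by
    intro K
    induction K with
    | zero =>
      have : P (2 * 0) = ∅ := by
        ext u
        constructor
        · rintro ⟨_, _, h3⟩; simp at h3
        · intro h; exact absurd h (Set.notMem_empty _)
      rw [this]; simp
    | succ K ih =>
      rw [show 2 * (K + 1) = 2 * K + 1 + 1 by ring, hstep, hstep, ih, if_pos (by simp),
        if_neg (by simp)]
      ring
  let S : List Bool → Set ℕ := fun u => {e | ∃ i, e = i + u.length ∧ u = fac w i u.length}
  have hne : ∀ u, IsFactorInf w u → (S u).Nonempty := fun u hu => by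
    obtain ⟨i, hi⟩ := (factor_iff w u u.length).1 ⟨hu, rfl⟩
    exact ⟨_, i, rfl, hi⟩
  have key : ∀ u v, IsFactorInf w u → IsFactorInf w v → Privileged u → Privileged v →
      u.length ≤ v.length → sInf (S u) = sInf (S v) → u = v := by
    intro u v hu hv hpu hpv hl he
    obtain ⟨i, hi1, hi2⟩ := Nat.sInf_mem (hne u hu)
    obtain ⟨j, hj1, hj2⟩ := Nat.sInf_mem (hne v hv)
    have hi : i = j + (v.length - u.length) := by omega
    rw [hi2] at hpu
    rw [hj2] at hpv
    have := priv_suffix w v.length j hpv (v.length - u.length) (by omega) (by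
      rw [← hi, show v.length - (v.length - u.length) = u.length by omega]; exact hpu)
    rw [← hi, show v.length - (v.length - u.length) = u.length by omega] at this
    have hmem : j + u.length ∈ S u := ⟨j, rfl, by
      rw [(fac_eq_iff w _ _ _).2 this]; exact hi2⟩
    have hle := Nat.sInf_le hmem
    have hlen : u.length = v.length := by omega
    have hij : i = j := by omega
    rw [hi2, hj2, hij, hlen]
  have hinj : Set.InjOn (fun u => sInf (S u)) (P (2 * (N + p))) := by
    intro u hu v hv he
    rcases le_total u.length v.length with hl | hl
    · exact key u v hu.1 hv.1 hu.2.1 hv.2.1 hl he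
    · exact (key v u hv.1 hu.1 hv.2.1 hu.2.1 hl he.symm).symm
  have hmaps : ∀ u ∈ P (2 * (N + p)), sInf (S u) ∈ Set.Iio (N + p + 2 * (N + p) - 1) := by
    rintro u ⟨h1, h2, h3⟩
    obtain ⟨i, hi⟩ := (factor_iff w u u.length).1 ⟨h1, rfl⟩
    obtain ⟨i', hi', hE⟩ := per_first w hp hper u.length i
    have hmem : i' + u.length ∈ S u := ⟨i', rfl, by rw [← (fac_eq_iff w _ _ _).2 hE]; exact hi⟩
    have := Nat.sInf_le hmem
    show sInf (S u) < N + p + 2 * (N + p) - 1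
    omega
  have h1 := Set.ncard_le_ncard_of_injOn _ hmaps hinj (Set.finite_Iio _)
  have h3 : ∀ M : ℕ, (Set.Iio M).ncard = M := fun M => by
    rw [← Finset.coe_Iio, Set.ncard_coe_finset]; simp
  rw [hcard, h3] at h1
  omega

theorem bool_main : Sturmian w ↔ ∀ n : ℕ, privComplexityInf w n = if Even n then 1 else 2 := by
  constructor
  · intro hS
    have hA := sturm_aper w hS
    have hB := sturm_bal w hS
    have hiff : ∀ i n, Privileged (fac w i n) ↔ PalW w i n := fun i n =>
      ⟨priv_pal w hA (hB n) n i le_rfl, pal_priv w hA (hB n) n i (by omega)⟩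
    intro n
    unfold privComplexityInf
    rw [priv_set]
    rcases Nat.even_or_odd' n with ⟨k, rfl | rfl⟩
    · rw [if_pos (by simp), Set.ncard_eq_one]
      obtain ⟨i, hi⟩ := pal_even w hA (hB (2 * k)) k (by omega)
      refine ⟨fac w i (2 * k), ?_⟩
      ext u
      constructor
      · rintro ⟨j, rfl, hj⟩
        exact (fac_eq_iff w _ _ _).2 (pal_unique_even w (hB (2 * k)) k j i le_rfl
          ((hiff _ _).1 hj) hi)
      · rintro rfl
        exact ⟨i, rfl, (hiff _ _).2 hi⟩
    · rw [if_neg (by simp), Set.ncard_eq_two]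
      obtain ⟨i, hi, hit⟩ := pal_odd w hA (hB (2 * k)) true k (by omega)
      obtain ⟨j, hj, hjf⟩ := pal_odd w hA (hB (2 * k)) false k (by omega)
      refine ⟨fac w i (2 * k + 1), fac w j (2 * k + 1), ?_, ?_⟩
      · intro h
        have := (fac_eq_iff w _ _ _).1 h k (by omega)
        rw [hit, hjf] at this
        simp at this
      · ext u
        constructor
        · rintro ⟨l, rfl, hl⟩
          have hl' := (hiff _ _).1 hl
          cases hc : w (l + k)
          · right
            exact (fac_eq_iff w _ _ _).2 (pal_unique_odd w (hB (2 * k + 1)) k l j le_rfl hl' hj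
              (by rw [hc, hjf]))
          · left
            exact (fac_eq_iff w _ _ _).2 (pal_unique_odd w (hB (2 * k + 1)) k l i le_rfl hl' hi
              (by rw [hc, hit]))
        · rintro (rfl | rfl)
          · exact ⟨i, rfl, (hiff _ _).2 hi⟩
          · exact ⟨j, rfl, (hiff _ _).2 hj⟩
  · intro h
    have hA := priv_aper w h
    have hB : ∀ m, Bal w m := by
      by_contra hnb
      obtain ⟨n, i, j, hb, hi, hi', hj, hj', hE, hP⟩ := min_unb w hnb
      have mk : ∀ x a, EqW w (i + 1) (x + 1) n → w x = a → w (x + (n + 1)) = a →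
          PalW w x (n + 2) := by
        intro x a hx h1 h2 k hk
        rcases Nat.eq_zero_or_pos k with rfl | hk0
        · simp only [add_zero, show n + 2 - 1 - 0 = n + 1 by omega]; rw [h1, h2]
        rcases Nat.lt_or_ge k (n + 1) with hk1 | hk1
        · have h3 := hx (k - 1) (by omega)
          have h4 := hx (n - 1 - (k - 1)) (by omega)
          rw [show x + k = x + 1 + (k - 1) by omega, ← h3, hP (k - 1) (by omega), h4]
          congr 1; omega
        · have : k = n + 1 := by omega
          subst this
          simp only [show n + 2 - 1 - (n + 1) = 0 by omega, add_zero]; rw [h1, h2]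
      have hpi := pal_priv w hA hb (n + 2) i (by omega) (mk i true (fun _ _ => rfl) hi hi')
      have hpj := pal_priv w hA hb (n + 2) j (by omega) (mk j false hE hj hj')
      have hne : fac w i (n + 2) ≠ fac w j (n + 2) := fun he => by
        have := (fac_eq_iff w _ _ _).1 he 0 (by omega)
        simp [hi, hj] at this
      have hn := h (n + 2)
      unfold privComplexityInf at hn
      rw [priv_set] at hn
      have mem : ∀ x, Privileged (fac w x (n + 2)) →
          fac w x (n + 2) ∈ {u | ∃ i, u = fac w i (n + 2) ∧ Privileged (fac w i (n + 2))} :=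
        fun x hx => ⟨x, rfl, hx⟩
      rcases Nat.even_or_odd' n with ⟨k, hk | hk⟩
      · rw [if_pos (by rw [hk]; simp [Nat.even_add]), Set.ncard_eq_one] at hn
        obtain ⟨u, hu⟩ := hn
        rw [hu] at mem
        have h1 : _ = u := mem i hpi
        have h2 : _ = u := mem j hpj
        exact hne (h1.trans h2.symm)
      · rw [if_neg (by rw [hk]; simp [Nat.even_add]), Set.ncard_eq_two] at hn
        obtain ⟨u, v, huv, hs⟩ := hn
        obtain ⟨l, hl, hlc⟩ := pal_odd w hA hb (!(w (i + (k + 1)))) (k + 1) (by omega)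
        rw [show 2 * (k + 1) + 1 = n + 2 by omega] at hl
        have hpl := pal_priv w hA hb (n + 2) l (by omega) hl
        have hli : fac w l (n + 2) ≠ fac w i (n + 2) := fun he => by
          have := (fac_eq_iff w _ _ _).1 he (k + 1) (by omega)
          rw [hlc] at this
          simp at this
        have hlj : fac w l (n + 2) ≠ fac w j (n + 2) := fun he => by
          have h1 := (fac_eq_iff w _ _ _).1 he (k + 1) (by omega)
          have h2 := hE k (by omega)
          rw [show i + 1 + k = i + (k + 1) by omega, show j + 1 + k = j + (k + 1) by omega] at h2
          rw [hlc, h2] at h1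
          simp at h1
        rw [hs] at mem
        have h1 : _ = u ∨ _ = v := mem i hpi
        have h2 : _ = u ∨ _ = v := mem j hpj
        have h3 : _ = u ∨ _ = v := mem l hpl
        rcases h1 with h1 | h1 <;> rcases h2 with h2 | h2 <;> rcases h3 with h3 | h3 <;>
          first
          | exact hne (h1.trans h2.symm)
          | exact hli (h3.trans h1.symm)
          | exact hlj (h3.trans h2.symm)
    intro n
    exact le_antisymm (card_le_of_bal w (hB n) le_rfl) (le_card w hA n)

end bin

/-! ### Reduction to a binary alphabet -/

section transfer
variable {A : Type*} (g : Bool → A)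

lemma fac_comp (w : ℕ → Bool) (i n : ℕ) : fac (fun x => g (w x)) i n = (fac w i n).map g := by
  simp [fac]

lemma eqw_comp (hg : Function.Injective g) (w : ℕ → Bool) (i j n : ℕ) : EqW (fun x => g (w x)) i j n ↔ EqW w i j n :=
  ⟨fun h k hk => hg (h k hk), fun h k hk => congrArg g (h k hk)⟩

lemma priv_comp (hg : Function.Injective g) (w : ℕ → Bool) (n : ℕ) : ∀ i, Privileged (fac (fun x => g (w x)) i n) ↔
    Privileged (fac w i n) := by
  induction n using Nat.strong_induction_on with
  | _ n ih =>
    intro i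
    rcases Nat.lt_or_ge n 2 with hn | hn
    · exact ⟨fun _ => priv_le_one _ _ _ (by omega), fun _ => priv_le_one _ _ _ (by omega)⟩
    · constructor
      · intro h
        obtain ⟨q, hq, hp, h1, h2⟩ := priv_cases _ i n hn h
        exact priv_mk w i n q hn hq ((ih q hq i).1 hp) ((eqw_comp g hg w _ _ _).1 h1)
          fun d hd hd' he => h2 d hd hd' ((eqw_comp g hg w _ _ _).2 he)
      · intro h
        obtain ⟨q, hq, hp, h1, h2⟩ := priv_cases _ i n hn h
        exact priv_mk _ i n q hn hq ((ih q hq i).2 hp) ((eqw_comp g hg w _ _ _).2 h1)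
          fun d hd hd' he => h2 d hd hd' ((eqw_comp g hg w _ _ _).1 he)

lemma privc_comp (hg : Function.Injective g) (w : ℕ → Bool) (n : ℕ) : privComplexityInf (fun x => g (w x)) n = privComplexityInf w n := by
  unfold privComplexityInf
  rw [← Set.ncard_image_of_injective _ (List.map_injective_iff.2 hg)]
  congr 1
  ext u
  constructor
  · rintro ⟨h1, h2, h3⟩
    obtain ⟨i, rfl⟩ := (factor_iff _ u n).1 ⟨h1, h3⟩
    exact ⟨fac w i n, ⟨fac_factor _ _ _, (priv_comp g hg w n i).1 h2, by simp⟩,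
      (fac_comp g w i n).symm⟩
  · rintro ⟨v, ⟨h1, h2, h3⟩, rfl⟩
    obtain ⟨i, rfl⟩ := (factor_iff _ v n).1 ⟨h1, h3⟩
    rw [← fac_comp]
    exact ⟨fac_factor _ _ _, (priv_comp g hg w n i).2 h2, by simp⟩

lemma sturm_comp (hg : Function.Injective g) (w : ℕ → Bool) : Sturmian (fun x => g (w x)) ↔ Sturmian w := by
  unfold Sturmian
  refine forall_congr' fun n => ?_
  rw [← Set.ncard_image_of_injective {u : List Bool | IsFactorInf w u ∧ u.length = n}
    (List.map_injective_iff.2 hg)]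
  have : {u | IsFactorInf (fun x => g (w x)) u ∧ u.length = n} =
      Set.image (List.map g) {u : List Bool | IsFactorInf w u ∧ u.length = n} := by
    ext u
    constructor
    · intro h
      obtain ⟨i, rfl⟩ := (factor_iff _ u n).1 h
      exact ⟨fac w i n, ⟨fac_factor _ _ _, by simp⟩, (fac_comp g w i n).symm⟩
    · rintro ⟨v, h, rfl⟩
      obtain ⟨i, rfl⟩ := (factor_iff _ v n).1 h
      rw [← fac_comp]
      exact ⟨fac_factor _ _ _, by simp⟩
  rw [this]

end transfer

lemma to_bool {A : Type*} (w : ℕ → A)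
    (h : Set.ncard {u : List A | IsFactorInf w u ∧ u.length = 1} = 2) :
    ∃ (g : Bool → A) (w' : ℕ → Bool), Function.Injective g ∧ w = fun x => g (w' x) := by
  classical
  obtain ⟨x, y, hxy, hs⟩ := Set.ncard_eq_two.1 h
  have hx : x ∈ {u : List A | IsFactorInf w u ∧ u.length = 1} := by rw [hs]; exact Or.inl rfl
  have hy : y ∈ {u : List A | IsFactorInf w u ∧ u.length = 1} := by rw [hs]; exact Or.inr rfl
  obtain ⟨a, rfl⟩ := List.length_eq_one_iff.1 hx.2
  obtain ⟨b, rfl⟩ := List.length_eq_one_iff.1 hy.2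
  have hab : a ≠ b := fun h => hxy (by rw [h])
  refine ⟨fun c => if c then a else b, fun n => decide (w n = a), ?_, ?_⟩
  · intro c d hcd
    cases c <;> cases d <;> simp at hcd ⊢
    · exact hab hcd.symm
    · exact hab hcd
  · funext n
    have hm : fac w n 1 ∈ {u : List A | IsFactorInf w u ∧ u.length = 1} :=
      ⟨fac_factor _ _ _, by simp⟩
    rw [hs] at hm
    by_cases hn : w n = a
    · simp [hn]
    · rcases hm with hm | hm
      · exact absurd (by simpa [fac] using hm) hn
      · have : w n = b := by simpa [fac] using hm
        simp [this, hab.symm]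

end SturmPriv

/-- An infinite word is Sturmian if and only if its privileged complexity
is 1 for even lengths and 2 for odd lengths. -/
theorem sturmian_iff_privileged_complexity {A : Type*} [Fintype A] (w : ℕ → A) :
    Sturmian w ↔ ∀ n : ℕ, privComplexityInf w n = if Even n then 1 else 2 := by

  have main : Set.ncard {u : List A | IsFactorInf w u ∧ u.length = 1} = 2 →
      (Sturmian w ↔ ∀ n : ℕ, privComplexityInf w n = if Even n then 1 else 2) := by
    intro h
    obtain ⟨g, w', hg, rfl⟩ := SturmPriv.to_bool w h
    rw [SturmPriv.sturm_comp g hg, SturmPriv.bool_main]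
    simp only [SturmPriv.privc_comp g hg]
  constructor
  · intro h
    exact (main (h 1)).1 h
  · intro h
    refine (main ?_).2 h
    have h1 := h 1
    rw [if_neg (by simp)] at h1
    rw [← h1]
    unfold privComplexityInf
    congr 1
    ext u
    constructor
    · rintro ⟨h2, h3⟩
      refine ⟨h2, ?_, h3⟩
      obtain ⟨a, rfl⟩ := List.length_eq_one_iff.1 h3
      exact Privileged.single a
    · rintro ⟨h2, _, h3⟩
      exact ⟨h2, h3⟩
end
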